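/- arXiv:1905.05589 — 6 statements merged into one kernel-verified Lean document; each statement's English description precedes it below -/
import Mathlib

section
/- Let p ≥ 1, n ≥ 1 and 1 ≤ s be integers, let τ be a permutation of Fin p with c orbits, and let t_1, …, t_s be points of Fin p lying in pairwise distinct orbits of τ. Then the number of functions i : Fin p → Fin n satisfying i ∘ τ = i and i(t_1) = i(t_2) = … = i(t_s) equals n^{c − s + 1}. -/
/-- The number of orbits of a permutation `τ` of `Fin p`: the number of orbits of the
action on `Fin p` of the cyclic subgroup generated by `τ`. -/
noncomputable def Equiv.Perm.numOrbits {p : ℕ} (τ : Equiv.Perm (Fin p)) : ℕ :=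
  Nat.card (MulAction.orbitRel.Quotient (Subgroup.zpowers τ) (Fin p))

theorem fixed_const_on_orbit {p n : ℕ} (τ : Equiv.Perm (Fin p)) (i : Fin p → Fin n)
    (hi : i ∘ τ = i) (k l : Fin p)
    (h : (Quotient.mk'' k : MulAction.orbitRel.Quotient (Subgroup.zpowers τ) (Fin p)) =
      Quotient.mk'' l) : i k = i l := by
  have h1 := Quotient.eq''.1 h
  rw [MulAction.orbitRel_apply] at h1
  obtain ⟨⟨g, hg⟩, rfl⟩ := h1
  obtain ⟨m, rfl⟩ := Subgroup.mem_zpowers_iff.1 hg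
  have hτ : ∀ x, i (τ x) = i x := fun x => congrFun hi x
  have hinv : ∀ x, i (τ⁻¹ x) = i x := fun x => by
    have := hτ (τ⁻¹ x)
    simpa using this.symm
  change i ((τ ^ m) l) = i l
  induction m using Int.induction_on with
  | zero => simp
  | succ m ih =>
    rw [add_comm, zpow_add, zpow_one, Equiv.Perm.mul_apply, hτ]
    exact ih (Subgroup.mem_zpowers_iff.2 ⟨_, rfl⟩) (Quotient.eq''.2 ⟨⟨_, Subgroup.mem_zpowers_iff.2 ⟨_, rfl⟩⟩, rfl⟩)
  | pred m ih =>
    rw [sub_eq_add_neg, add_comm, zpow_add, zpow_neg_one, Equiv.Perm.mul_apply, hinv]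
    exact ih (Subgroup.mem_zpowers_iff.2 ⟨_, rfl⟩) (Quotient.eq''.2 ⟨⟨_, Subgroup.mem_zpowers_iff.2 ⟨_, rfl⟩⟩, rfl⟩)

theorem card_fixed_functions_constant_on_points (p n s : ℕ) (hp : 1 ≤ p) (hn : 1 ≤ n)
    (hs : 1 ≤ s) (τ : Equiv.Perm (Fin p)) (t : Fin s → Fin p)
    (ht : ∀ a b : Fin s, a ≠ b →
      MulAction.orbit (Subgroup.zpowers τ) (t a) ≠ MulAction.orbit (Subgroup.zpowers τ) (t b)) :
    Nat.card {i : Fin p → Fin n // i ∘ τ = i ∧ ∀ a b : Fin s, i (t a) = i (t b)} =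
      n ^ (τ.numOrbits - s + 1) := by
  classical
  let Q := MulAction.orbitRel.Quotient (Subgroup.zpowers τ) (Fin p)
  let mk : Fin p → Q := fun k => Quotient.mk'' k
  have hmkτ : ∀ k, mk (τ k) = mk k := fun k =>
    Quotient.eq''.2 ⟨⟨τ, Subgroup.mem_zpowers τ⟩, rfl⟩
  have hout : ∀ q : Q, mk (Quotient.out q) = q := fun q => Quotient.out_eq' q
  let u : Fin s → Q := fun a => mk (t a)
  have hu : Function.Injective u := by
    intro a b hab
    by_contra hne
    exact ht a b hne (MulAction.orbit_eq_iff.2 (Quotient.eq''.1 hab))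
  have key : ∀ i : Fin p → Fin n, i ∘ τ = i → ∀ k l, mk k = mk l → i k = i l :=
    fun i hi k l h => fixed_const_on_orbit τ i hi k l h
  have : Finite Q := Finite.of_surjective mk (fun q => ⟨_, hout q⟩)
  have : Fintype Q := Fintype.ofFinite Q
  let z : Fin s := ⟨0, hs⟩
  let e : {i : Fin p → Fin n // i ∘ τ = i ∧ ∀ a b : Fin s, i (t a) = i (t b)} ≃
      ({q : Q // q ∉ Set.range u} → Fin n) × Fin n :=
    { toFun := fun i => (fun q => i.1 (Quotient.out q.1), i.1 (t z))
      invFun := fun g => ⟨fun k => if h : mk k ∈ Set.range u then g.2 else g.1 ⟨mk k, h⟩, by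
        constructor
        · funext k
          simp only [Function.comp, hmkτ]
        · intro a b
          have h1 : ∀ a, mk (t a) ∈ Set.range u := fun a => ⟨a, rfl⟩
          simp only [h1, dif_pos]⟩
      left_inv := by
        rintro ⟨i, hi, hc⟩
        apply Subtype.ext
        funext k
        dsimp only
        split_ifs with h
        · obtain ⟨a, ha⟩ := h
          rw [hc z a]
          exact key i hi _ _ ha
        · exact key i hi _ _ (hout _)
      right_inv := by
        rintro ⟨g, x⟩
        refine Prod.ext ?_ ?_
        · funext q
          dsimp only
          have : mk (Quotient.out q.1) ∉ Set.range u := by rw [hout]; exact q.2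
          rw [dif_neg this]
          congr 1
          exact Subtype.ext (hout _)
        · have : mk (t z) ∈ Set.range u := ⟨z, rfl⟩
          dsimp only
          rw [dif_pos this] }
  have hcard : Nat.card {q : Q // q ∉ Set.range u} = τ.numOrbits - s := by
    have h1 : Nat.card {q : Q // q ∈ Set.range u} = s := by
      rw [← Nat.card_congr (Equiv.ofInjective u hu)]; simp
    have h2 := Nat.card_congr (Equiv.sumCompl (fun q : Q => q ∈ Set.range u))
    rw [Nat.card_sum, h1] at h2
    have h3 : τ.numOrbits = Nat.card Q := rfl
    omega
  rw [Nat.card_congr e, Nat.card_prod, Nat.card_fun, hcard, Nat.card_fin, pow_succ]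
end

section
/- Let p ≥ 1 and let π be a noncrossing finpartition of Fin p with |π| blocks. Then the number of orbits of the permutation γ ∘ σ_π⁻¹ of Fin p equals p + 1 − |π|. -/
/-- A finpartition of `Fin p` is noncrossing if there are no `a < b < c < d` with
`a, c` in one block and `b, d` in a different block. -/
def IsNoncrossing {p : ℕ} (π : Finpartition (Finset.univ : Finset (Fin p))) : Prop :=
  ∀ a b c d : Fin p, a < b → b < c → c < d →
    ∀ B ∈ π.parts, ∀ B' ∈ π.parts, a ∈ B → c ∈ B → b ∈ B' → d ∈ B' → B = B'

/-- `σ` is the permutation `σ_π` associated to the finpartition `π` of `Fin p`: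
each element of a block is sent to the next larger element of the same block,
and the largest element of a block is sent to the smallest element of that block. -/
def IsBlockPerm {p : ℕ} (π : Finpartition (Finset.univ : Finset (Fin p)))
    (σ : Equiv.Perm (Fin p)) : Prop :=
  ∀ B ∈ π.parts, ∀ x ∈ B, σ x ∈ B ∧
    ((∃ y ∈ B, x < y) → (x < σ x ∧ ∀ y ∈ B, x < y → σ x ≤ y)) ∧
    ((∀ y ∈ B, y ≤ x) → ∀ y ∈ B, σ x ≤ y)

/-- If each weak descent of `τ` is the maximum of its cycle, the orbits are counted by the
weak descents. -/
theorem numOrbits_eq_card_descents {p : ℕ} (τ : Equiv.Perm (Fin p))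
    (h : ∀ y z, τ y ≤ y → τ.SameCycle y z → z ≤ y) :
    τ.numOrbits = (Finset.univ.filter (fun y => τ y ≤ y)).card := by
  classical
  have key : ∀ a b : Fin p, (MulAction.orbitRel (Subgroup.zpowers τ) (Fin p)) a b ↔
      τ.SameCycle b a := by
    intro a b
    rw [MulAction.orbitRel_apply, MulAction.mem_orbit_iff]
    constructor
    · rintro ⟨⟨g, k, rfl⟩, hg⟩
      exact ⟨k, hg⟩
    · rintro ⟨k, hk⟩
      exact ⟨⟨τ ^ k, k, rfl⟩, hk⟩
  unfold Equiv.Perm.numOrbits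
  rw [← Fintype.card_subtype, ← Nat.card_eq_fintype_card]
  symm
  refine Nat.card_congr (Equiv.ofBijective
    (fun y : {y // τ y ≤ y} =>
      (Quotient.mk (MulAction.orbitRel (Subgroup.zpowers τ) (Fin p)) y.1 :
        MulAction.orbitRel.Quotient (Subgroup.zpowers τ) (Fin p))) ⟨?_, ?_⟩)
  · rintro ⟨y, hy⟩ ⟨z, hz⟩ hyz
    have h1 := (key _ _).1 (Quotient.exact hyz)
    exact Subtype.ext (le_antisymm (h z y hz h1) (h y z hy h1.symm))
  · intro q
    induction q using Quotient.inductionOn with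
    | h a =>
      have hne : (Finset.univ.filter (fun z => τ.SameCycle a z)).Nonempty :=
        ⟨a, by simpa using Equiv.Perm.SameCycle.refl τ a⟩
      obtain ⟨m, hm, hmax⟩ := Finset.exists_max_image _ id hne
      simp only [Finset.mem_filter, Finset.mem_univ, true_and, id] at hm hmax
      refine ⟨⟨m, hmax _ ?_⟩, Quotient.sound ((key _ _).2 hm)⟩
      exact Equiv.Perm.sameCycle_apply_right.2 hm

theorem numOrbits_finRotate_mul_inv_blockPerm (p : ℕ) (hp : 1 ≤ p)
    (π : Finpartition (Finset.univ : Finset (Fin p))) (hπ : IsNoncrossing π)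
    (σ : Equiv.Perm (Fin p)) (hσ : IsBlockPerm π σ) :
    (finRotate p * σ⁻¹).numOrbits = p + 1 - π.parts.card := by
  classical
  obtain ⟨n, rfl⟩ : ∃ n, p = n + 1 := ⟨p - 1, by omega⟩
  have hmem : ∀ a, a ∈ π.part a := fun a => π.mem_part (Finset.mem_univ a)
  have hparts : ∀ a, π.part a ∈ π.parts := fun a => π.part_mem.2 (Finset.mem_univ a)
  have hiff : ∀ a b, a ∈ π.part b ↔ π.part a = π.part b := fun a b =>
    π.mem_part_iff_part_eq_part (Finset.mem_univ a) (Finset.mem_univ b)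
  have nc : ∀ a b c d, a < b → b < c → c < d → π.part a = π.part c → π.part b = π.part d →
      π.part a = π.part b := fun a b c d h1 h2 h3 h4 h5 =>
    hπ a b c d h1 h2 h3 _ (hparts a) _ (hparts b) (hmem a) ((hiff _ _).2 h4.symm) (hmem b)
      ((hiff _ _).2 h5.symm)
  have F1 : ∀ x, π.part (σ x) = π.part x := fun x =>
    (hiff _ _).1 (hσ _ (hparts x) x (hmem x)).1
  have F2 : ∀ x y, π.part y = π.part x → x < y → x < σ x ∧ σ x ≤ y := fun x y h h' =>
    have := (hσ _ (hparts x) x (hmem x)).2.1 ⟨y, (hiff _ _).2 h, h'⟩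
    ⟨this.1, this.2 y ((hiff _ _).2 h) h'⟩
  have F3 : ∀ x, (∀ y, π.part y = π.part x → y ≤ x) → ∀ y, π.part y = π.part x → σ x ≤ y :=
    fun x h y hy => (hσ _ (hparts x) x (hmem x)).2.2 (fun y hy => h y ((hiff _ _).1 hy)) y
      ((hiff _ _).2 hy)
  have F4 : ∀ y, π.part y = π.part (Fin.last n) → σ (Fin.last n) ≤ y :=
    F3 _ (fun y _ => Fin.le_last y)
  have T : ∀ x, (finRotate (n+1) * σ⁻¹) (σ x) = finRotate (n+1) x := by intro x; simp
  have R0 : finRotate (n+1) (Fin.last n) = 0 := by simp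
  have R1 : ∀ x, x ≠ Fin.last n → (finRotate (n+1) x).val = x.val + 1 := fun x hx =>
    coe_finRotate_of_ne_last hx
  have lt_last : ∀ x : Fin (n+1), x ≠ Fin.last n → x < Fin.last n := fun x hx =>
    Fin.lt_last_iff_ne_last.2 hx
  have inv : ∀ x w, finRotate (n+1) x ≤ σ x → finRotate (n+1) x ≤ σ w → σ w ≤ σ x →
      finRotate (n+1) x ≤ finRotate (n+1) w ∧ finRotate (n+1) w ≤ σ x := by
    intro x w h1 h2 h3
    rcases eq_or_lt_of_le h3 with h | h
    · have := σ.injective h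
      subst this
      exact ⟨le_rfl, h1⟩
    by_cases hx : x = Fin.last n
    · subst hx
      rw [R0]
      refine ⟨Fin.zero_le _, ?_⟩
      by_cases hw : w = Fin.last n
      · subst hw; exact absurd h (lt_irrefl _)
      have hlt : w < σ (Fin.last n) := by
        by_contra hcon
        rcases eq_or_lt_of_le (not_lt.1 hcon) with e | e
        · exact absurd (F4 (σ w) (by rw [F1, ← e, F1])) (not_le.2 h)
        · exact absurd (F4 (σ w) ((nc _ _ _ _ h e (lt_last w hw) (F1 w) (F1 _)).trans (F1 _)))
            (not_le.2 h)
      have := R1 w hw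
      rw [Fin.lt_def] at hlt
      rw [Fin.le_def]; omega
    · have hr := R1 x hx
      have hxz : x < σ w := by rw [Fin.le_def] at h2; rw [Fin.lt_def]; omega
      have hnot : π.part (σ w) ≠ π.part x := fun e =>
        absurd (F2 x (σ w) e hxz).2 (not_le.2 h)
      have hwy : w < σ x := by
        by_contra hcon
        rcases eq_or_lt_of_le (not_lt.1 hcon) with e | e
        · exact hnot (by rw [F1, ← e, F1])
        · exact hnot (nc _ _ _ _ hxz h e (F1 x).symm (F1 w)).symm
      have hxw : x ≤ w := by
        by_contra hcon
        have := nc _ _ _ _ (not_le.1 hcon) hxz h (F1 w).symm (F1 x).symm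
        exact hnot ((F1 w).trans this)
      have hw : w ≠ Fin.last n := fun e => absurd (Fin.le_last (σ x)) (not_le.2 (e ▸ hwy))
      have := R1 w hw
      rw [Fin.le_def] at hxw
      rw [Fin.lt_def] at hwy
      rw [Fin.le_def, Fin.le_def]
      omega
  rw [numOrbits_eq_card_descents]
  · -- counting
    set M : Finset (Fin (n+1)) :=
      Finset.univ.filter (fun y => ∀ z, π.part z = π.part y → y ≤ z) with hM
    have hcard : M.card = π.parts.card := by
      refine Finset.card_bij (fun y _ => π.part y) (fun y _ => hparts y) ?_ ?_
      · intro a ha b hb hab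
        simp only [hM, Finset.mem_filter, Finset.mem_univ, true_and] at ha hb
        exact le_antisymm (ha b hab.symm) (hb a hab)
      · intro B hB
        have hne := π.nonempty_of_mem_parts hB
        have hB' : ∀ z ∈ B, π.part z = B := fun z hz => π.part_eq_of_mem hB hz
        refine ⟨B.min' hne, ?_, hB' _ (B.min'_mem hne)⟩
        simp only [hM, Finset.mem_filter, Finset.mem_univ, true_and]
        intro z hz
        rw [hB' _ (B.min'_mem hne)] at hz
        exact B.min'_le z (hz ▸ hmem z)
    have h0 : σ (Fin.last n) ∈ M := by
      simp only [hM, Finset.mem_filter, Finset.mem_univ, true_and]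
      intro z hz
      exact F4 z (hz.trans (F1 _))
    have hD : Finset.univ.filter (fun y => (finRotate (n+1) * σ⁻¹) y ≤ y)
        = (M.erase (σ (Fin.last n)))ᶜ := by
      ext y
      obtain ⟨x, rfl⟩ := σ.surjective y
      simp only [Finset.mem_filter, Finset.mem_univ, true_and, Finset.mem_compl,
        Finset.mem_erase, hM, T]
      rw [← not_lt, not_iff_not, σ.injective.ne_iff]
      constructor
      · intro h
        have hx : x ≠ Fin.last n := by
          rintro rfl
          rw [R0] at h
          exact absurd h (not_lt.2 (Fin.zero_le _))
        refine ⟨hx, fun z hz => F3 x (fun y hy => ?_) z (hz.trans (F1 x))⟩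
        by_contra hc
        have h1 := (F2 x y hy (not_le.1 hc)).1
        have := R1 x hx
        rw [Fin.lt_def] at h h1
        omega
      · rintro ⟨hx, h⟩
        have h1 := h x (F1 x).symm
        have := R1 x hx
        rw [Fin.le_def] at h1
        rw [Fin.lt_def]
        omega
    rw [hD, Finset.card_compl, Finset.card_erase_of_mem h0, hcard, Fintype.card_fin]
    have : 0 < M.card := Finset.card_pos.2 ⟨_, h0⟩
    omega
  · intro y z hy hyz
    obtain ⟨k, -, rfl⟩ := hyz.exists_pow_eq'
    generalize finRotate (n+1) * σ⁻¹ = τ at *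
    suffices H : ∀ k : ℕ, τ y ≤ (τ ^ k) y ∧ (τ ^ k) y ≤ y from (H k).2
    intro k
    induction k with
    | zero => simpa using hy
    | succ k ih =>
      rw [show (τ ^ (k + 1)) y = τ ((τ ^ k) y) by rw [pow_succ', Equiv.Perm.mul_apply]]
      generalize (τ ^ k) y = z at ih
      obtain ⟨x, rfl⟩ := σ.surjective y
      obtain ⟨w, rfl⟩ := σ.surjective z
      rw [T] at hy ih ⊢
      rw [T]
      exact inv x w hy ih.1 ih.2
end

section
/- Let p_1, …, p_s be positive integers with sum p, and let π be a noncrossing finpartition of Fin p. Then the join π ⊔ γ_{(p_1,…,p_s)} in the lattice of finpartitions of Fin p is the one-block partition ⊤ if and only if the s points 0, p_1, p_1 + p_2, …, p_1 + … + p_{s−1} of Fin p lie in pairwise distinct orbits of the permutation γ ∘ σ_π⁻¹. -/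
/-- The index of the interval (among the consecutive intervals of lengths `q 0, q 1, …`)
containing `k : Fin p`: the number of prefix sums `q 0 + ⋯ + q i` which are `≤ k`. -/
def intervalIdx {s : ℕ} (q : Fin s → ℕ) {p : ℕ} (k : Fin p) : ℕ :=
  (Finset.univ.filter fun i : Fin s =>
    ∑ j ∈ Finset.univ.filter fun j : Fin s => j ≤ i, q j ≤ (k : ℕ)).card

/-- The interval finpartition `γ_{(q 0, …, q (s-1))}` of `Fin p`, whose blocks are the
consecutive intervals of lengths `q 0`, `q 1`, …, `q (s-1)` (when `∑ i, q i = p` and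
all `q i ≥ 1`). -/
def intervalPart (p : ℕ) {s : ℕ} (q : Fin s → ℕ) :
    Finpartition (Finset.univ : Finset (Fin p)) :=
  letI : DecidableRel ⇑(Setoid.ker (intervalIdx q (p := p))) := fun x y =>
    inferInstanceAs (Decidable (intervalIdx q x = intervalIdx q y))
  Finpartition.ofSetoid (Setoid.ker (intervalIdx q))

theorem fp_le_iff {p : ℕ} (P Q : Finpartition (Finset.univ : Finset (Fin p))) :
    P ≤ Q ↔ ∀ u v, v ∈ P.part u → v ∈ Q.part u := by
  constructor
  · intro h u v hv
    obtain ⟨c, hc, hle⟩ := h (P.part_mem.2 (Finset.mem_univ u))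
    have hu : u ∈ c := hle (P.mem_part (Finset.mem_univ u))
    rw [Q.part_eq_of_mem hc hu]
    exact hle hv
  · intro h B hB
    obtain ⟨u, hu⟩ := P.nonempty_of_mem_parts hB
    refine ⟨Q.part u, Q.part_mem.2 (Finset.mem_univ u), ?_⟩
    intro v hv
    apply h
    rw [P.part_eq_of_mem hB hu]
    exact hv

theorem fp_mem_top {p : ℕ} (u v : Fin p) :
    v ∈ (⊤ : Finpartition (Finset.univ : Finset (Fin p))).part u := by
  have h := Finpartition.parts_top_subset (Finset.univ : Finset (Fin p))
    ((⊤ : Finpartition (Finset.univ : Finset (Fin p))).part_mem.2 (Finset.mem_univ u))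
  rw [Finset.mem_singleton] at h
  rw [h]
  exact Finset.mem_univ v

theorem mem_intervalPart {s p : ℕ} (q : Fin s → ℕ) (u v : Fin p) :
    v ∈ (intervalPart p q).part u ↔ intervalIdx q u = intervalIdx q v := by
  unfold intervalPart
  letI : DecidableRel ⇑(Setoid.ker (intervalIdx q (p := p))) := fun x y =>
    inferInstanceAs (Decidable (intervalIdx q x = intervalIdx q y))
  exact Finpartition.mem_part_ofSetoid_iff_rel

theorem idx_aux {s p : ℕ} (q : Fin s → ℕ) (u v : Fin p) (huv : u ≤ v)
    (h : intervalIdx q u = intervalIdx q v) (i : Fin s)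
    (hi : ∑ j ∈ Finset.univ.filter (fun j : Fin s => j ≤ i), q j ≤ (v : ℕ)) :
    ∑ j ∈ Finset.univ.filter (fun j : Fin s => j ≤ i), q j ≤ (u : ℕ) := by
  unfold intervalIdx at h
  have hsub : (Finset.univ.filter fun i : Fin s =>
      ∑ j ∈ Finset.univ.filter fun j : Fin s => j ≤ i, q j ≤ (u : ℕ)) ⊆
      (Finset.univ.filter fun i : Fin s =>
      ∑ j ∈ Finset.univ.filter fun j : Fin s => j ≤ i, q j ≤ (v : ℕ)) := by
    intro k hk
    simp only [Finset.mem_filter, Finset.mem_univ, true_and] at hk ⊢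
    exact hk.trans huv
  have he := Finset.eq_of_subset_of_card_le hsub h.ge
  have : i ∈ (Finset.univ.filter fun i : Fin s =>
      ∑ j ∈ Finset.univ.filter fun j : Fin s => j ≤ i, q j ≤ (v : ℕ)) := by
    simpa using hi
  rw [← he] at this
  simpa using this

/-- prefix sums, shifted index -/
theorem prefix_succ {s : ℕ} (q : Fin s → ℕ) (i a : Fin s) (h : (i : ℕ) + 1 = a) :
    ∑ j ∈ Finset.univ.filter (fun j : Fin s => j < a), q j =
      ∑ j ∈ Finset.univ.filter (fun j : Fin s => j ≤ i), q j := by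
  congr 1
  ext j
  simp only [Finset.mem_filter, Finset.mem_univ, true_and, Fin.lt_def, Fin.le_def]
  omega

theorem idx_lt_iff {s p : ℕ} (q : Fin s → ℕ) (t : Fin s → Fin p)
    (ht : ∀ a : Fin s, (t a : ℕ) = ∑ j ∈ Finset.univ.filter fun j : Fin s => j < a, q j)
    (u v : Fin p) (h : intervalIdx q u = intervalIdx q v) (a : Fin s) :
    u < t a ↔ v < t a := by
  have key : ∀ u v : Fin p, intervalIdx q u = intervalIdx q v → u < t a → v < t a := by
    intro u v h hu
    by_contra hv
    rw [not_lt] at hv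
    rcases Nat.eq_zero_or_pos (a : ℕ) with h0 | h0
    · have : (t a : ℕ) = 0 := by
        rw [ht a]
        apply Finset.sum_eq_zero
        intro j hj
        simp only [Finset.mem_filter, Finset.mem_univ, true_and, Fin.lt_def] at hj
        omega
      rw [Fin.lt_def] at hu
      omega
    · let i : Fin s := ⟨a - 1, by omega⟩
      have hi := prefix_succ q i a (by simp only [i]; omega)
      rw [Fin.lt_def, ht a, hi] at hu
      rw [Fin.le_def, ht a, hi] at hv
      have := idx_aux q u v (by rw [Fin.le_def]; omega) h i hv
      omega
  exact ⟨key u v h, key v u h.symm⟩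

theorem cut_of_change {s p : ℕ} (hs : 1 ≤ s) (q : Fin s → ℕ) (hsum : ∑ i, q i = p)
    (t : Fin s → Fin p)
    (ht : ∀ a : Fin s, (t a : ℕ) = ∑ j ∈ Finset.univ.filter fun j : Fin s => j < a, q j)
    (z : Fin p) (h : intervalIdx q z ≠ intervalIdx q (finRotate p z)) :
    ∃ a, t a = finRotate p z := by
  obtain ⟨n, rfl⟩ : ∃ n, p = n + 1 := ⟨p - 1, by have := z.2; omega⟩
  by_cases hz : z = Fin.last n
  · refine ⟨⟨0, hs⟩, ?_⟩
    subst hz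
    rw [finRotate_last]
    apply Fin.ext
    rw [ht]
    apply Finset.sum_eq_zero
    intro j hj
    simp [Fin.lt_def] at hj
  · have hlt : z < Fin.last n := lt_of_le_of_ne (Fin.le_last z) hz
    have hv : ((finRotate (n+1) z : Fin (n+1)) : ℕ) = z + 1 := coe_finRotate_of_ne_last hz
    by_contra hc
    push Not at hc
    apply h
    unfold intervalIdx
    congr 1
    ext i
    simp only [Finset.mem_filter, Finset.mem_univ, true_and]
    rw [hv]
    constructor
    · intro h; omega
    · intro hle
      by_contra hgt
      have heq : ∑ j ∈ Finset.univ.filter (fun j : Fin s => j ≤ i), q j = z + 1 := by omega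
      by_cases hi : (i : ℕ) + 1 < s
      · apply hc ⟨i + 1, hi⟩
        apply Fin.ext
        rw [ht, hv, prefix_succ q i ⟨i + 1, hi⟩ rfl, heq]
      · have : Finset.univ.filter (fun j : Fin s => j ≤ i) = Finset.univ := by
          ext j
          have := j.2
          simp only [Finset.mem_filter, Finset.mem_univ, true_and, Fin.le_def, iff_true]
          omega
        rw [this, hsum] at heq
        rw [Fin.lt_def, Fin.val_last] at hlt
        omega

theorem t_strictMono {s p : ℕ} (q : Fin s → ℕ) (hq : ∀ i, 1 ≤ q i) (t : Fin s → Fin p)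
    (ht : ∀ a : Fin s, (t a : ℕ) = ∑ j ∈ Finset.univ.filter fun j : Fin s => j < a, q j) :
    StrictMono t := by
  intro a b hab
  rw [Fin.lt_def, ht, ht]
  apply Finset.sum_lt_sum_of_subset (i := a)
  · intro j hj
    simp only [Finset.mem_filter, Finset.mem_univ, true_and] at hj ⊢
    exact hj.trans hab
  · simpa using hab
  · simp
  · exact hq a
  · intros; exact Nat.zero_le _

/-- Moving along an orbit does not change which pairs in a block are separated. -/
theorem sep_step {p : ℕ} (π : Finpartition (Finset.univ : Finset (Fin p)))
    (hπ : IsNoncrossing π) (σ : Equiv.Perm (Fin p)) (hσ : IsBlockPerm π σ)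
    (y u v : Fin p) (huv : v ∈ π.part u) :
    ((u < σ y ↔ v < σ y) ↔ (u < finRotate p y ↔ v < finRotate p y)) := by
  have hrot : (u < finRotate p y ↔ v < finRotate p y) ↔ (u ≤ y ↔ v ≤ y) := by
    obtain ⟨n, rfl⟩ : ∃ n, p = n + 1 := ⟨p - 1, by have := y.2; omega⟩
    by_cases hz : y = Fin.last n
    · subst hz
      rw [finRotate_last]
      simp [Fin.le_last]
    · have hv : ((finRotate (n+1) y : Fin (n+1)) : ℕ) = y + 1 := coe_finRotate_of_ne_last hz
      simp only [Fin.lt_def, hv, Fin.le_def, Nat.lt_succ_iff]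
  rw [hrot]
  have hB := π.part_mem.2 (Finset.mem_univ y)
  have hy := π.mem_part (Finset.mem_univ y)
  have hB' := π.part_mem.2 (Finset.mem_univ u)
  have hu := π.mem_part (Finset.mem_univ u)
  generalize π.part y = B at *
  generalize π.part u = B' at *
  obtain ⟨h1, h2, h3⟩ := hσ B hB y hy
  by_cases hBB : B' = B
  · subst hBB
    by_cases hmax : ∃ w ∈ B', y < w
    · obtain ⟨h4, h5⟩ := h2 hmax
      have e : ∀ w ∈ B', (w < σ y ↔ w ≤ y) := by
        intro w hw
        constructor
        · intro hlt
          by_contra hc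
          exact absurd (h5 w hw (not_le.1 hc)) (not_le.2 hlt)
        · intro hle
          exact lt_of_le_of_lt hle h4
      rw [e u hu, e v huv]
    · push Not at hmax
      have := h3 hmax
      have a1 := this u hu
      have a2 := this v huv
      have a3 := hmax u hu
      have a4 := hmax v huv
      simp [not_lt.2 a1, not_lt.2 a2, a3, a4]
  · have hne : ∀ w ∈ B', ∀ x ∈ B, w ≠ x := by
      rintro w hw x hx rfl
      exact hBB (π.eq_of_mem_parts hB' hB hw hx)
    have n1 := hne u hu y hy
    have n2 := hne u hu _ h1
    have n3 := hne v huv y hy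
    have n4 := hne v huv _ h1
    have c1 : ∀ x ∈ B, ∀ x' ∈ B, ∀ w ∈ B', ∀ w' ∈ B', ¬ (x < w ∧ w < x' ∧ x' < w') :=
      fun x hx x' hx' w hw w' hw' ⟨l1, l2, l3⟩ =>
        hBB (hπ x w x' w' l1 l2 l3 B hB B' hB' hx hx' hw hw').symm
    have c2 : ∀ x ∈ B, ∀ x' ∈ B, ∀ w ∈ B', ∀ w' ∈ B', ¬ (w < x ∧ x < w' ∧ w' < x') :=
      fun x hx x' hx' w hw w' hw' ⟨l1, l2, l3⟩ =>
        hBB (hπ w x w' x' l1 l2 l3 B' hB' B hB hw hw' hx hx')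
    have d1 := c1 y hy _ h1 u hu v huv
    have d2 := c1 y hy _ h1 v huv u hu
    have d3 := c1 _ h1 y hy u hu v huv
    have d4 := c1 _ h1 y hy v huv u hu
    have d5 := c2 y hy _ h1 u hu v huv
    have d6 := c2 y hy _ h1 v huv u hu
    have d7 := c2 _ h1 y hy u hu v huv
    have d8 := c2 _ h1 y hy v huv u hu
    clear c1 c2 hne h2 h3 hrot
    simp only [Fin.lt_def, Fin.le_def, ne_eq, Fin.ext_iff] at n1 n2 n3 n4 d1 d2 d3 d4 d5 d6 d7 d8 ⊢
    omega

theorem sep_orbit {p : ℕ} (π : Finpartition (Finset.univ : Finset (Fin p)))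
    (hπ : IsNoncrossing π) (σ : Equiv.Perm (Fin p)) (hσ : IsBlockPerm π σ)
    (u v : Fin p) (huv : v ∈ π.part u) (x : Fin p) (n : ℕ) :
    ((u < x ↔ v < x) ↔ (u < ((finRotate p * σ⁻¹) ^ n) x ↔ v < ((finRotate p * σ⁻¹) ^ n) x)) := by
  induction n with
  | zero => simp
  | succ n ih =>
    rw [ih, pow_succ']
    have := sep_step π hπ σ hσ (σ⁻¹ (((finRotate p * σ⁻¹) ^ n) x)) u v huv
    rw [← Equiv.Perm.mul_apply σ, mul_inv_cancel, Equiv.Perm.one_apply] at this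
    exact this

theorem orbit_eq_iff_pow {p : ℕ} (τ : Equiv.Perm (Fin p)) (x y : Fin p) :
    MulAction.orbit (Subgroup.zpowers τ) x = MulAction.orbit (Subgroup.zpowers τ) y ↔
      ∃ n : ℕ, (τ ^ n) y = x := by
  rw [MulAction.orbit_eq_iff]
  constructor
  · rintro ⟨⟨g, hg⟩, h⟩
    rw [← mem_powers_iff_mem_zpowers] at hg
    obtain ⟨n, rfl⟩ := hg
    exact ⟨n, h⟩
  · rintro ⟨n, h⟩
    exact ⟨⟨τ ^ n, Subgroup.npow_mem_zpowers τ n⟩, h⟩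

theorem exists_change {p : ℕ} {α : Type*} (c : Fin p → α) (u v : Fin p) (h : c u ≠ c v) :
    ∃ z, c z ≠ c (finRotate p z) := by
  by_contra hc
  push Not at hc
  obtain ⟨n, rfl⟩ : ∃ n, p = n + 1 := ⟨p - 1, by have := u.2; omega⟩
  have key : ∀ k : ℕ, ∀ hk : k < n + 1, c ⟨k, hk⟩ = c 0 := by
    intro k
    induction k with
    | zero => intro _; rfl
    | succ k ih =>
      intro hk
      rw [← ih (by omega), hc ⟨k, by omega⟩]
      congr 1
      apply Fin.ext
      rw [coe_finRotate_of_ne_last]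
      intro h
      rw [Fin.ext_iff, Fin.val_last] at h
      simp only at h
      omega
  exact h ((key u u.2).trans (key v v.2).symm)

/-- Every orbit through a colour change contains another colour change. -/
theorem second_change {p : ℕ} {α : Type*} (c : Fin p → α) (σ : Equiv.Perm (Fin p))
    (hc : ∀ x, c (σ x) = c x) (z : Fin p) (hz : c z ≠ c (finRotate p z)) :
    ∃ w n, c w ≠ c (finRotate p w) ∧ w ≠ z ∧
      ((finRotate p * σ⁻¹) ^ n) (finRotate p z) = finRotate p w := by
  by_contra hcon
  push Not at hcon
  have hc' : ∀ x, c (σ⁻¹ x) = c x := by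
    intro x
    rw [← hc, ← Equiv.Perm.mul_apply, mul_inv_cancel, Equiv.Perm.one_apply]
  set τ := finRotate p * σ⁻¹ with hτ
  have step : ∀ n, τ ((τ ^ n) (finRotate p z)) =
      finRotate p (σ⁻¹ ((τ ^ n) (finRotate p z))) := fun n => rfl
  have key : ∀ n : ℕ, c ((τ ^ n) (finRotate p z)) = c (finRotate p z) := by
    intro n
    induction n with
    | zero => rfl
    | succ n ih =>
      by_cases hw : σ⁻¹ ((τ ^ n) (finRotate p z)) = z
      · rw [pow_succ', Equiv.Perm.mul_apply, step, hw]
      · rw [pow_succ', Equiv.Perm.mul_apply, step]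
        by_contra hne
        refine hcon (σ⁻¹ ((τ ^ n) (finRotate p z))) (n + 1) ?_ hw ?_
        · rw [hc', ih]
          exact fun h => hne h.symm
        · rw [pow_succ', Equiv.Perm.mul_apply, step]
  have hpos := orderOf_pos τ
  have h1 : τ ((τ ^ (orderOf τ - 1)) (finRotate p z)) = finRotate p z := by
    rw [← Equiv.Perm.mul_apply, ← pow_succ', Nat.sub_add_cancel hpos, pow_orderOf_eq_one]
    rfl
  rw [step] at h1
  have h2 := (finRotate p).injective h1
  apply hz
  rw [← key (orderOf τ - 1), ← hc' ((τ ^ (orderOf τ - 1)) _), h2]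

theorem join_eq_top_iff_distinct_orbits (s p : ℕ) (hs : 1 ≤ s) (q : Fin s → ℕ)
    (hq : ∀ i, 1 ≤ q i) (hsum : ∑ i, q i = p)
    (π : Finpartition (Finset.univ : Finset (Fin p))) (hπ : IsNoncrossing π)
    (σ : Equiv.Perm (Fin p)) (hσ : IsBlockPerm π σ)
    (t : Fin s → Fin p)
    (ht : ∀ a : Fin s, (t a : ℕ) = ∑ j ∈ Finset.univ.filter fun j : Fin s => j < a, q j) :
    IsLUB ({π, intervalPart p q} : Set (Finpartition (Finset.univ : Finset (Fin p)))) ⊤ ↔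
      ∀ a b : Fin s, a ≠ b →
        MulAction.orbit (Subgroup.zpowers (finRotate p * σ⁻¹)) (t a) ≠
          MulAction.orbit (Subgroup.zpowers (finRotate p * σ⁻¹)) (t b) := by
  constructor
  · intro hlub a b hab horb
    obtain ⟨n, hn⟩ := (orbit_eq_iff_pow _ _ _).1 horb
    classical
    let f : Fin p → Prop := fun u => (u < t a ↔ u < t b)
    let ρ : Finpartition (Finset.univ : Finset (Fin p)) := Finpartition.ofSetoid (Setoid.ker f)
    have hρ : ∀ u v, v ∈ ρ.part u ↔ f u = f v := by
      intro u v
      rw [Finpartition.mem_part_ofSetoid_iff_rel]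
      exact Iff.rfl
    have hub : ρ ∈ upperBounds
        ({π, intervalPart p q} : Set (Finpartition (Finset.univ : Finset (Fin p)))) := by
      intro P hP
      rcases hP with rfl | hP
      · rw [fp_le_iff]
        intro u v huv
        rw [hρ]
        have := sep_orbit P hπ σ hσ u v huv (t b) n
        rw [hn] at this
        simp only [f, eq_iff_iff]
        tauto
      · rw [Set.mem_singleton_iff] at hP
        subst hP
        rw [fp_le_iff]
        intro u v huv
        rw [hρ]
        rw [mem_intervalPart] at huv
        have h1 := idx_lt_iff q t ht u v huv a
        have h2 := idx_lt_iff q t ht u v huv b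
        simp only [f, eq_iff_iff]
        tauto
    have hle := hlub.2 hub
    have := (fp_le_iff _ _).1 hle (t a) (t b) (fp_mem_top _ _)
    rw [hρ] at this
    have hne : t a ≠ t b := fun h => hab ((t_strictMono q hq t ht).injective h)
    simp only [f, eq_iff_iff, lt_irrefl, false_iff, iff_false, not_lt] at this
    rcases lt_or_gt_of_ne hne with h | h
    · exact absurd (this.2 h.le) (not_le.2 h)
    · exact absurd (this.1 h.le) (not_le.2 h)
  · intro horb
    refine ⟨fun P _ => le_top, ?_⟩
    intro ρ hρ
    have h1 : π ≤ ρ := hρ (Or.inl rfl)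
    have h2 : intervalPart p q ≤ ρ := hρ (Or.inr rfl)
    rw [fp_le_iff] at h1 h2 ⊢
    have hpart : ∀ u v, v ∈ ρ.part u → ρ.part v = ρ.part u := by
      intro u v h
      exact ρ.part_eq_of_mem (ρ.part_mem.2 (Finset.mem_univ u)) h
    intro u v _
    by_contra hv
    have hne : ρ.part u ≠ ρ.part v := by
      intro h
      apply hv
      rw [h]
      exact ρ.mem_part (Finset.mem_univ v)
    have hcσ : ∀ x, ρ.part (σ x) = ρ.part x := by
      intro x
      apply hpart
      apply h1
      exact (hσ _ (π.part_mem.2 (Finset.mem_univ x)) x (π.mem_part (Finset.mem_univ x))).1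
    have hcut : ∀ z, ρ.part z ≠ ρ.part (finRotate p z) → ∃ a, t a = finRotate p z := by
      intro z hz
      apply cut_of_change hs q hsum t ht z
      intro h
      exact hz (hpart _ _ (h2 _ _ ((mem_intervalPart q _ _).2 h))).symm
    obtain ⟨z, hz⟩ := exists_change ρ.part u v hne
    obtain ⟨w, n, hw, hwz, hn⟩ := second_change ρ.part σ hcσ z hz
    obtain ⟨a, ha⟩ := hcut z hz
    obtain ⟨b, hb⟩ := hcut w hw
    have hab : b ≠ a := by
      rintro rfl
      exact hwz ((finRotate p).injective (hb.symm.trans ha))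
    apply horb b a hab
    rw [orbit_eq_iff_pow]
    exact ⟨n, by rw [ha, hb, hn]⟩
end

section
/- Let p_1, …, p_s be positive integers with sum p, let n ≥ 1, and let π be a noncrossing finpartition of Fin p such that the join π ⊔ γ_{(p_1,…,p_s)} in the lattice of finpartitions of Fin p is the one-block partition ⊤. Then the number of functions i : Fin p → Fin n satisfying i(0) = i(p_1) = i(p_1+p_2) = … = i(p_1+…+p_{s−1}) and i ∘ (γ ∘ σ_π⁻¹) = i equals n^{p + 2 − s − |π|}, where |π| is the number of blocks of π. -/
/-- `u` and `v` lie in the same Kreweras block: the points separating them form a union of blocks. -/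
def KrRel {p : ℕ} {α : Type*} (f : Fin p → α) (u v : Fin p) : Prop :=
  ∀ x y, f x = f y → ((u ≤ x ↔ v ≤ x) ↔ (u ≤ y ↔ v ≤ y))

theorem KrRel.refl {p : ℕ} {α : Type*} (f : Fin p → α) (u : Fin p) : KrRel f u u := by
  intro x y _; simp

theorem KrRel.symm {p : ℕ} {α : Type*} {f : Fin p → α} {u v : Fin p} (h : KrRel f u v) :
    KrRel f v u := by
  intro x y hxy
  have := h x y hxy
  tauto

theorem KrRel.trans {p : ℕ} {α : Type*} {f : Fin p → α} {u v w : Fin p} (h : KrRel f u v)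
    (h' : KrRel f v w) : KrRel f u w := by
  intro x y hxy
  have h1 := h x y hxy
  have h2 := h' x y hxy
  tauto

section aux
variable {m : ℕ} {α : Type*} (f : Fin (m+1) → α) (σ : Equiv.Perm (Fin (m+1)))

theorem kr_step
    (hN : ∀ a b c d, a < b → b < c → c < d → f a = f c → f b = f d → f a = f b)
    (S1 : ∀ x, f (σ x) = f x)
    (S2 : ∀ x y, f y = f x → x < y → x < σ x ∧ σ x ≤ y)
    (S3 : ∀ x, (∀ y, f y = f x → y ≤ x) → ∀ y, f y = f x → σ x ≤ y)
    (y : Fin (m+1)) : KrRel f (finRotate (m+1) y) (σ y) := by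
  suffices H : ∀ x z, f x = f z → ¬ (finRotate (m+1) y ≤ x ↔ σ y ≤ x) →
      ¬ (finRotate (m+1) y ≤ z ↔ σ y ≤ z) by
    intro x z hxz
    have h1 := H x z hxz
    have h2 := H z x hxz.symm
    tauto
  intro x z hxz hx hz
  have hs1 := S1 y
  by_cases hmax : ∀ w, f w = f y → w ≤ y
  · have h3 := S3 y hmax
    have hle := h3 y rfl
    by_cases hy : y = Fin.last m
    · subst hy
      rw [finRotate_last] at hx hz
      have hx' : x < σ (Fin.last m) := by
        by_contra h; apply hx; simp; exact not_lt.mp h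
      have hz' : σ (Fin.last m) ≤ z := by
        by_contra h; simp at hz; exact h hz
      have hfx : f x ≠ f (Fin.last m) := fun h => absurd (h3 x h) (not_le.mpr hx')
      have hz1 : σ (Fin.last m) < z := lt_of_le_of_ne hz' (by rintro h; apply hfx; rw [hxz, ← h, hs1])
      have hz2 : z < Fin.last m := lt_of_le_of_ne (Fin.le_last z) (by rintro h; apply hfx; rw [hxz, h])
      exact hfx ((hN _ _ _ _ hx' hz1 hz2 hxz hs1).trans hs1)
    · have hlt : y < Fin.last m := lt_of_le_of_ne (Fin.le_last y) hy
      have hv : ((finRotate (m+1) y : Fin (m+1)) : ℕ) = y + 1 := coe_finRotate_of_ne_last hy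
      have hx1 : σ y ≤ x ∧ x ≤ y := by
        simp only [Fin.le_def, hv] at hx hle ⊢; omega
      have hz1 : z < σ y ∨ y < z := by
        simp only [Fin.le_def, Fin.lt_def, hv] at hz hle ⊢; omega
      by_cases hfx : f x = f y
      · have e1 := h3 z (hxz.symm.trans hfx)
        have e2 := hmax z (hxz.symm.trans hfx)
        rcases hz1 with h | h
        · exact absurd e1 (not_le.mpr h)
        · exact absurd e2 (not_le.mpr h)
      · have hx2 : σ y < x := lt_of_le_of_ne hx1.1 (by rintro h; apply hfx; rw [← h, hs1])
        have hx3 : x < y := lt_of_le_of_ne hx1.2 (by rintro h; apply hfx; rw [h])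
        rcases hz1 with h | h
        · exact hfx (hxz.trans ((hN _ _ _ _ h hx2 hx3 hxz.symm hs1).trans hs1))
        · exact hfx ((hN _ _ _ _ hx2 hx3 h hs1 hxz).symm.trans hs1)
  · push Not at hmax
    obtain ⟨w, hw, hyw⟩ := hmax
    have h2 := (S2 y w hw hyw).1
    have hy : y ≠ Fin.last m := by
      rintro rfl; exact absurd hyw (not_lt.mpr (Fin.le_last w))
    have hv : ((finRotate (m+1) y : Fin (m+1)) : ℕ) = y + 1 := coe_finRotate_of_ne_last hy
    have hx1 : y < x ∧ x < σ y := by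
      simp only [Fin.le_def, Fin.lt_def, hv] at hx h2 ⊢; omega
    have hz1 : z ≤ y ∨ σ y ≤ z := by
      simp only [Fin.le_def, hv, Fin.lt_def] at hz h2 ⊢; omega
    by_cases hfx : f x = f y
    · exact absurd (S2 y x hfx hx1.1).2 (not_le.mpr hx1.2)
    · rcases hz1 with h | h
      · have h' : z < y := lt_of_le_of_ne h (by rintro h; apply hfx; rw [hxz, h])
        exact hfx (hxz.trans (hN _ _ _ _ h' hx1.1 hx1.2 hxz.symm hs1.symm))
      · have h' : σ y < z := lt_of_le_of_ne h (by rintro h; apply hfx; rw [hxz, ← h, hs1])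
        exact hfx (hN _ _ _ _ hx1.1 hx1.2 h' hs1.symm hxz).symm

theorem kr_max (u : Fin (m+1)) : ∃ y, f y = f u ∧ ∀ w, f w = f y → w ≤ y := by
  classical
  obtain ⟨y, hy, hy'⟩ := Finset.exists_max_image (Finset.univ.filter fun w => f w = f u) id
    ⟨u, by simp⟩
  simp only [Finset.mem_filter, Finset.mem_univ, true_and, id] at hy hy'
  exact ⟨y, hy, fun w hw => hy' w (hw.trans hy)⟩

theorem kr_inv
    (hN : ∀ a b c d, a < b → b < c → c < d → f a = f c → f b = f d → f a = f b)
    (S1 : ∀ x, f (σ x) = f x)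
    (S2 : ∀ x y, f y = f x → x < y → x < σ x ∧ σ x ≤ y)
    (S3 : ∀ x, (∀ y, f y = f x → y ≤ x) → ∀ y, f y = f x → σ x ≤ y)
    {β : Type*} (i : Fin (m+1) → β) (hi : ∀ y, i (finRotate (m+1) y) = i (σ y)) :
    ∀ (k : ℕ) (u v : Fin (m+1)), (v : ℕ) - u ≤ k → u ≤ v → KrRel f u v → i u = i v := by
  intro k
  induction k with
  | zero =>
    intro u v h1 h2 _
    have : u = v := by apply Fin.ext; rw [Fin.le_def] at h2; omega
    rw [this]
  | succ k ih =>
    intro u v h1 h2 h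
    rcases h2.eq_or_lt with rfl | h2
    · rfl
    obtain ⟨y, hyu, hy⟩ := kr_max f u
    have huy : u ≤ y := hy u hyu.symm
    have hyv : y < v := by
      have := h u y hyu.symm
      by_contra hc
      have hc := not_lt.mp hc
      have h2' := not_le.mpr h2
      simp [h2', huy, hc] at this
    have hsu : σ y ≤ u := S3 y hy u hyu.symm
    have hus : u ≤ σ y := by
      have := h u (σ y) (by rw [S1, hyu])
      by_contra hc
      have h2' := not_le.mpr h2
      have h3' : ¬ v ≤ σ y := fun h => absurd (hsu.trans_lt h2) (not_lt.mpr h)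
      simp [h2', hc, h3'] at this
    have hsy : σ y = u := le_antisymm hsu hus
    have hne : y ≠ Fin.last m := by
      rintro rfl; exact absurd hyv (not_lt.mpr (Fin.le_last v))
    have hv : ((finRotate (m+1) y : Fin (m+1)) : ℕ) = y + 1 := coe_finRotate_of_ne_last hne
    have hst := kr_step f σ hN S1 S2 S3 y
    rw [hsy] at hst
    rw [← hsy, ← hi]
    apply ih
    · rw [Fin.lt_def] at hyv; rw [Fin.le_def] at huy; omega
    · rw [Fin.le_def, hv]; exact hyv
    · exact hst.trans h

theorem kr_rep
    (hN : ∀ a b c d, a < b → b < c → c < d → f a = f c → f b = f d → f a = f b)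
    (S1 : ∀ x, f (σ x) = f x)
    (S2 : ∀ x y, f y = f x → x < y → x < σ x ∧ σ x ≤ y)
    (S3 : ∀ x, (∀ y, f y = f x → y ≤ x) → ∀ y, f y = f x → σ x ≤ y) :
    ∀ (k : ℕ) (u : Fin (m+1)), m - (u : ℕ) ≤ k →
      ∃ x, (x = 0 ∨ ∃ y, y < x ∧ f y = f x) ∧ KrRel f u x := by
  intro k
  induction k with
  | zero =>
    intro u hu
    by_cases hmin : ∃ y, y < u ∧ f y = f u
    · exact ⟨u, Or.inr hmin, KrRel.refl f u⟩
    push Not at hmin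
    have hul : u = Fin.last m := by
      apply Fin.ext; have := u.2; simp; omega
    have hst := kr_step f σ hN S1 S2 S3 u
    have h1 : σ u = u := by
      refine le_antisymm (S3 u ?_ u rfl) ?_
      · intro y _; rw [hul]; exact Fin.le_last y
      · by_contra hc; exact hmin _ (not_le.mp hc) (S1 u)
    rw [h1] at hst
    refine ⟨0, Or.inl rfl, ?_⟩
    have h0 : finRotate (m+1) u = 0 := by rw [hul, finRotate_last]
    rw [h0] at hst
    exact hst.symm
  | succ k ih =>
    intro u hu
    by_cases hmin : ∃ y, y < u ∧ f y = f u
    · exact ⟨u, Or.inr hmin, KrRel.refl f u⟩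
    push Not at hmin
    obtain ⟨y, hyu, hy⟩ := kr_max f u
    have huy : u ≤ y := hy u hyu.symm
    have h1 : σ y = u := by
      refine le_antisymm (S3 y hy u hyu.symm) ?_
      by_contra hc; exact hmin _ (not_le.mp hc) (by rw [S1, hyu])
    have hst := kr_step f σ hN S1 S2 S3 y
    rw [h1] at hst
    by_cases hyl : y = Fin.last m
    · refine ⟨0, Or.inl rfl, ?_⟩
      have h0 : finRotate (m+1) y = 0 := by rw [hyl, finRotate_last]
      rw [h0] at hst
      exact hst.symm
    · have hv : ((finRotate (m+1) y : Fin (m+1)) : ℕ) = y + 1 := coe_finRotate_of_ne_last hyl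
      obtain ⟨x, hx, hx'⟩ := ih (finRotate (m+1) y) (by rw [hv]; rw [Fin.le_def] at huy; omega)
      exact ⟨x, hx, hst.symm.trans hx'⟩

theorem kr_uniq_lt {x y : Fin (m+1)} (hlt : x < y) (hx : x = 0 ∨ ∃ z, z < x ∧ f z = f x)
    (hy : y = 0 ∨ ∃ z, z < y ∧ f z = f y) : ¬ KrRel f x y := by
  intro h
  rcases hx with rfl | ⟨z, hz, hfz⟩
  · rcases hy with rfl | ⟨z, hz, hfz⟩
    · exact lt_irrefl _ hlt
    · have := h z y hfz
      simp [not_le.mpr hz] at this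
  · have := h z x hfz
    simp [not_le.mpr hz, not_le.mpr hlt, not_le.mpr (hz.trans hlt)] at this

/-- The Kreweras setoid. -/
def krSetoid : Setoid (Fin (m+1)) :=
  ⟨KrRel f, ⟨KrRel.refl f, KrRel.symm, KrRel.trans⟩⟩

theorem kr_card [DecidableEq α]
    (hN : ∀ a b c d, a < b → b < c → c < d → f a = f c → f b = f d → f a = f b)
    (S1 : ∀ x, f (σ x) = f x)
    (S2 : ∀ x y, f y = f x → x < y → x < σ x ∧ σ x ≤ y)
    (S3 : ∀ x, (∀ y, f y = f x → y ≤ x) → ∀ y, f y = f x → σ x ≤ y) :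
    Nat.card (Quotient (krSetoid f)) + (Finset.univ.image f).card = m + 2 := by
  classical
  let N : Finset (Fin (m+1)) := Finset.univ.filter fun x => ∃ y, y < x ∧ f y = f x
  have h0N : (0 : Fin (m+1)) ∉ N := by
    simp [N]
  have hQ : Nat.card (Quotient (krSetoid f)) = N.card + 1 := by
    have hmem : ∀ x, x ∈ insert 0 N ↔ (x = 0 ∨ ∃ y, y < x ∧ f y = f x) := by
      intro x; simp [N]
    rw [← Finset.card_insert_of_notMem h0N, ← Nat.card_eq_finsetCard]
    symm
    apply Nat.card_eq_of_bijective
      (fun x : {x // x ∈ insert 0 N} => (Quotient.mk (krSetoid f) x.1))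
    constructor
    · rintro ⟨x, hx⟩ ⟨y, hy⟩ hxy
      have hR : KrRel f x y := Quotient.exact hxy
      have hx := (hmem x).1 hx
      have hy := (hmem y).1 hy
      apply Subtype.ext
      rcases lt_trichotomy x y with h | h | h
      · exact absurd hR (kr_uniq_lt f h hx hy)
      · exact h
      · exact absurd hR.symm (kr_uniq_lt f h hy hx)
    · intro c
      induction c using Quotient.inductionOn with
      | h u =>
        obtain ⟨x, hx, hux⟩ := kr_rep f σ hN S1 S2 S3 _ u le_rfl
        exact ⟨⟨x, (hmem x).2 hx⟩, Quotient.sound hux.symm⟩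
  have hM : (Finset.univ.image f).card = (Finset.univ.filter fun x => ¬ ∃ y, y < x ∧ f y = f x).card := by
    symm
    apply Finset.card_bij (fun x _ => f x)
    · intro x _; simp
    · intro x hx y hy hxy
      simp only [Finset.mem_filter, Finset.mem_univ, true_and, not_exists, not_and] at hx hy
      rcases lt_trichotomy x y with h | h | h
      · exact absurd hxy (hy x h)
      · exact h
      · exact absurd hxy.symm (hx y h)
    · intro b hb
      simp only [Finset.mem_image, Finset.mem_univ, true_and] at hb
      obtain ⟨u, rfl⟩ := hb
      obtain ⟨y, hy, hy'⟩ := Finset.exists_min_image (Finset.univ.filter fun w => f w = f u) id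
        ⟨u, by simp⟩
      simp only [Finset.mem_filter, Finset.mem_univ, true_and, id] at hy hy'
      refine ⟨y, ?_, hy⟩
      simp only [Finset.mem_filter, Finset.mem_univ, true_and, not_exists, not_and]
      intro w hw hfw
      exact absurd (hy' w (hfw.trans hy)) (not_le.mpr hw)
  have := Finset.card_filter_add_card_filter_not (s := (Finset.univ : Finset (Fin (m+1)))) (fun x => ∃ y, y < x ∧ f y = f x)
  simp only [Finset.card_univ, Fintype.card_fin] at this
  change N.card + _ = _ at this
  rw [hQ, hM]
  omega
end aux

theorem card_const_on {Q : Type*} [Finite Q] {s n : ℕ} (hs : 1 ≤ s) (t : Fin s → Q)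
    (ht : Function.Injective t) :
    Nat.card {g : Q → Fin n // ∀ a b, g (t a) = g (t b)} = n ^ (Nat.card Q + 1 - s) := by
  classical
  haveI := Fintype.ofFinite Q
  let a0 : Fin s := ⟨0, hs⟩
  let e : {g : Q → Fin n // ∀ a b, g (t a) = g (t b)} ≃
      (Option {c : Q // c ∉ Set.range t} → Fin n) :=
    { toFun := fun g o => o.elim (g.1 (t a0)) (fun c => g.1 c.1)
      invFun := fun h => ⟨fun c => if hc : c ∈ Set.range t then h none else h (some ⟨c, hc⟩), by
        intro a b; simp⟩
      left_inv := by
        rintro ⟨g, hg⟩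
        apply Subtype.ext
        funext c
        by_cases hc : c ∈ Set.range t
        · obtain ⟨a, rfl⟩ := hc
          simp [hg a a0]
        · simp only [hc, dite_false, Option.elim]
      right_inv := by
        intro h
        funext o
        cases o with
        | none => simp
        | some c => simp only [Option.elim, c.2, dite_false] }
  rw [Nat.card_congr e, Nat.card_fun, Nat.card_fin, Finite.card_option]
  congr 1
  have h1 : Nat.card (Set.range t) = s := by
    rw [Nat.card_range_of_injective ht, Nat.card_fin]
  have h2 : Nat.card {c : Q // c ∈ Set.range t} + Nat.card {c : Q // c ∉ Set.range t} = Nat.card Q := by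
    rw [← Nat.card_sum]
    exact Nat.card_congr (Equiv.sumCompl _)
  have h3 : Nat.card {c : Q // c ∈ Set.range t} = s := h1
  omega

theorem intervalIdx_sep {s p : ℕ} (q : Fin s → ℕ) (a : Fin s) (x z : Fin p) (hxz : x ≤ z)
    (h : intervalIdx q x = intervalIdx q z)
    (hz : ∑ j ∈ Finset.univ.filter (fun j : Fin s => j < a), q j ≤ (z : ℕ)) :
    ∑ j ∈ Finset.univ.filter (fun j : Fin s => j < a), q j ≤ (x : ℕ) := by
  rcases Nat.eq_zero_or_pos (a : ℕ) with h0 | h0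
  · have : Finset.univ.filter (fun j : Fin s => j < a) = ∅ := by
      ext j; simp [Fin.le_def, h0]
    simp [this]
  · let b : Fin s := ⟨a - 1, by omega⟩
    have hb : Finset.univ.filter (fun j : Fin s => j < a) = Finset.univ.filter (fun j : Fin s => j ≤ b) := by
      ext j; simp only [Finset.mem_filter, Finset.mem_univ, true_and, Fin.le_def, Fin.lt_def, b]; omega
    rw [hb] at hz ⊢
    unfold intervalIdx at h
    have hsub : (Finset.univ.filter fun i : Fin s =>
        ∑ j ∈ Finset.univ.filter fun j : Fin s => j ≤ i, q j ≤ (x : ℕ)) ⊆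
        (Finset.univ.filter fun i : Fin s =>
        ∑ j ∈ Finset.univ.filter fun j : Fin s => j ≤ i, q j ≤ (z : ℕ)) := by
      intro i hi
      simp only [Finset.mem_filter, Finset.mem_univ, true_and] at hi ⊢
      exact hi.trans hxz
    have heq := Finset.eq_of_subset_of_card_le hsub h.ge
    have hbm : b ∈ (Finset.univ.filter fun i : Fin s =>
        ∑ j ∈ Finset.univ.filter fun j : Fin s => j ≤ i, q j ≤ (z : ℕ)) := by
      simpa using hz
    rw [← heq] at hbm
    simpa using hbm

theorem le_ofSetoid {p : ℕ} (P : Finpartition (Finset.univ : Finset (Fin p)))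
    (r : Setoid (Fin p)) [DecidableRel ⇑r]
    (h : ∀ B ∈ P.parts, ∀ x ∈ B, ∀ y ∈ B, r x y) : P ≤ Finpartition.ofSetoid r := by
  intro B hB
  obtain ⟨x, hx⟩ := P.nonempty_of_mem_parts hB
  refine ⟨(Finpartition.ofSetoid r).part x, ?_, ?_⟩
  · simp
  · intro y hy
    rw [Finpartition.mem_part_ofSetoid_iff_rel]
    exact h B hB x hx y hy

theorem kr_contra {m s : ℕ} (q : Fin s → ℕ) (hq : ∀ i, 1 ≤ q i)
    (π : Finpartition (Finset.univ : Finset (Fin (m+1))))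
    (t : Fin s → Fin (m+1))
    (ht : ∀ a : Fin s, (t a : ℕ) = ∑ j ∈ Finset.univ.filter fun j : Fin s => j < a, q j)
    (htop : IsLUB ({π, intervalPart (m+1) q} : Set (Finpartition (Finset.univ : Finset (Fin (m+1))))) ⊤)
    (a b : Fin s) (hab : a < b) : ¬ KrRel π.part (t a) (t b) := by
  classical
  intro h
  have hlt : t a < t b := by
    rw [Fin.lt_def, ht, ht]
    apply Finset.sum_lt_sum_of_subset (i := a)
    · intro j; simp only [Finset.mem_filter, Finset.mem_univ, true_and]; exact fun h => h.trans hab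
    · simpa using hab
    · simp
    · exact hq a
    · intros; exact Nat.zero_le _
  have hsep : ∀ (c : Fin s) (x z : Fin (m+1)), intervalIdx q x = intervalIdx q z →
      (t c ≤ x ↔ t c ≤ z) := by
    intro c x z hxz
    simp only [Fin.le_def, ht]
    rcases le_total x z with h | h
    · exact ⟨fun h' => h'.trans h, intervalIdx_sep q c x z h hxz⟩
    · exact ⟨intervalIdx_sep q c z x h hxz.symm, fun h' => h'.trans h⟩
  let r : Setoid (Fin (m+1)) := Setoid.ker (fun x => (t a ≤ x ↔ t b ≤ x))
  have hub : Finpartition.ofSetoid r ∈ upperBounds ({π, intervalPart (m+1) q} : Set (Finpartition (Finset.univ : Finset (Fin (m+1))))) := by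
    rintro P (rfl | rfl)
    · apply le_ofSetoid
      intro B hB x hx y hy
      have : P.part x = P.part y := by
        rw [P.part_eq_of_mem hB hx, P.part_eq_of_mem hB hy]
      exact propext (h x y this)
    · apply le_ofSetoid
      intro B hB x hx y hy
      have : intervalIdx q x = intervalIdx q y := by
        unfold intervalPart at hB
        letI : DecidableRel ⇑(Setoid.ker (intervalIdx q (p := m+1))) := fun x y =>
          inferInstanceAs (Decidable (intervalIdx q x = intervalIdx q y))
        have e := Finpartition.part_eq_of_mem _ hB hx
        rw [← e, Finpartition.mem_part_ofSetoid_iff_rel] at hy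
        exact hy
      show (t a ≤ x ↔ t b ≤ x) = (t a ≤ y ↔ t b ≤ y)
      rw [hsep a x y this, hsep b x y this]
  have hle := htop.2 hub
  have hle' : Finpartition.indiscrete (Finset.univ_nonempty (α := Fin (m+1))).ne_empty ≤ Finpartition.ofSetoid r :=
    le_top.trans hle
  obtain ⟨C, hC, hCs⟩ := hle' (b := Finset.univ) (by simp)
  have e := Finpartition.part_eq_of_mem _ hC (hCs (Finset.mem_univ (t a)))
  have hm := hCs (Finset.mem_univ (t b))
  rw [← e, Finpartition.mem_part_ofSetoid_iff_rel] at hm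
  have hm' : (t a ≤ t a ↔ t b ≤ t a) = (t a ≤ t b ↔ t b ≤ t b) := hm
  simp [not_le.mpr hlt, hlt.le] at hm'

theorem card_functions_fixed_by_kreweras (s p n : ℕ) (hs : 1 ≤ s) (hn : 1 ≤ n)
    (q : Fin s → ℕ) (hq : ∀ i, 1 ≤ q i) (hsum : ∑ i, q i = p)
    (π : Finpartition (Finset.univ : Finset (Fin p))) (hπ : IsNoncrossing π)
    (σ : Equiv.Perm (Fin p)) (hσ : IsBlockPerm π σ)
    (t : Fin s → Fin p)
    (ht : ∀ a : Fin s, (t a : ℕ) = ∑ j ∈ Finset.univ.filter fun j : Fin s => j < a, q j)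
    (htop : IsLUB ({π, intervalPart p q} : Set (Finpartition (Finset.univ : Finset (Fin p)))) ⊤) :
    Nat.card {i : Fin p → Fin n //
        (∀ a b : Fin s, i (t a) = i (t b)) ∧ i ∘ (finRotate p * σ⁻¹) = i} =
      n ^ (p + 2 - s - π.parts.card) := by
    classical
  have hp : 1 ≤ p := by have := (t ⟨0, hs⟩).2; omega
  obtain ⟨m, rfl⟩ : ∃ m, p = m + 1 := ⟨p - 1, by omega⟩
  have hmem : ∀ x, π.part x ∈ π.parts := fun x => by simp
  have hin : ∀ x, x ∈ π.part x := fun x => by simp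
  have hiff : ∀ x y, π.part y = π.part x → y ∈ π.part x := fun x y h => h ▸ hin y
  have hiff2 : ∀ x y, y ∈ π.part x → π.part y = π.part x :=
    fun x y h => π.part_eq_of_mem (hmem x) h
  have hN : ∀ a b c d, a < b → b < c → c < d → π.part a = π.part c → π.part b = π.part d →
      π.part a = π.part b := by
    intro a b c d h1 h2 h3 h4 h5
    exact hπ a b c d h1 h2 h3 _ (hmem a) _ (hmem b) (hin a) (hiff _ _ h4.symm) (hin b)
      (hiff _ _ h5.symm)
  have S1 : ∀ x, π.part (σ x) = π.part x := fun x =>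
    hiff2 _ _ (hσ _ (hmem x) x (hin x)).1
  have S2 : ∀ x y, π.part y = π.part x → x < y → x < σ x ∧ σ x ≤ y := by
    intro x y h hxy
    have := (hσ _ (hmem x) x (hin x)).2.1 ⟨y, hiff _ _ h, hxy⟩
    exact ⟨this.1, this.2 y (hiff _ _ h) hxy⟩
  have S3 : ∀ x, (∀ y, π.part y = π.part x → y ≤ x) → ∀ y, π.part y = π.part x → σ x ≤ y := by
    intro x h y hy
    exact (hσ _ (hmem x) x (hin x)).2.2 (fun y hy => h y (hiff2 _ _ hy)) y (hiff _ _ hy)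
  have hparts : Finset.univ.image π.part = π.parts := by
    ext B
    simp only [Finset.mem_image, Finset.mem_univ, true_and]
    constructor
    · rintro ⟨x, rfl⟩; exact hmem x
    · intro hB
      obtain ⟨x, hx⟩ := π.nonempty_of_mem_parts hB
      exact ⟨x, π.part_eq_of_mem hB hx⟩
  have hcard := kr_card π.part σ hN S1 S2 S3
  rw [hparts] at hcard
  have hinj : Function.Injective (fun a => Quotient.mk (krSetoid π.part) (t a)) := by
    intro a b hab
    have hR : KrRel π.part (t a) (t b) := Quotient.exact hab
    rcases lt_trichotomy a b with h | h | h
    · exact absurd hR (kr_contra q hq π t ht htop a b h)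
    · exact h
    · exact absurd hR.symm (kr_contra q hq π t ht htop b a h)
  have hcount := card_const_on (n := n) hs _ hinj
  have hexp : m + 1 + 2 - s - π.parts.card = Nat.card (Quotient (krSetoid π.part)) + 1 - s := by
    omega
  rw [hexp, ← hcount]
  have hfix : ∀ i : Fin (m+1) → Fin n, i ∘ (finRotate (m+1) * σ⁻¹ : Equiv.Perm (Fin (m+1))) = i →
      ∀ y, i (finRotate (m+1) y) = i (σ y) := by
    intro i hi y
    have := congrFun hi (σ y)
    simpa using this
  have hrel : ∀ i : Fin (m+1) → Fin n, i ∘ (finRotate (m+1) * σ⁻¹ : Equiv.Perm (Fin (m+1))) = i →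
      ∀ u v, KrRel π.part u v → i u = i v := by
    intro i hi u v h
    rcases le_total u v with h' | h'
    · exact kr_inv π.part σ hN S1 S2 S3 i (hfix i hi) _ u v le_rfl h' h
    · exact (kr_inv π.part σ hN S1 S2 S3 i (hfix i hi) _ v u le_rfl h' h.symm).symm
  symm
  apply Nat.card_eq_of_bijective (fun g : {g : Quotient (krSetoid π.part) → Fin n //
      ∀ a b, g (Quotient.mk (krSetoid π.part) (t a)) = g (Quotient.mk (krSetoid π.part) (t b))} =>
    (⟨fun x => g.1 (Quotient.mk _ x), g.2, by
      funext x
      simp only [Function.comp]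
      apply congrArg
      apply Quotient.sound
      have := kr_step π.part σ hN S1 S2 S3 (σ⁻¹ x)
      rw [show σ (σ⁻¹ x) = x by simp] at this
      exact this⟩ : {i : Fin (m+1) → Fin n //
        (∀ a b : Fin s, i (t a) = i (t b)) ∧ i ∘ (finRotate (m+1) * σ⁻¹ : Equiv.Perm (Fin (m+1))) = i}))
  constructor
  · rintro ⟨g, hg⟩ ⟨g', hg'⟩ h
    apply Subtype.ext
    funext c
    induction c using Quotient.inductionOn with
    | h u => exact congrFun (congrArg Subtype.val h) u
  · rintro ⟨i, hi1, hi2⟩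
    exact ⟨⟨Quotient.lift i (fun u v h => hrel i hi2 u v h), hi1⟩, rfl⟩
end

section
/- Let q ≥ 1 and let ε : Fin 2q → Fin 2 be the function taking the value 0 on {0,…,q−1} and the value 1 on {q,…,2q−1}. Then there is exactly one ε-adapted noncrossing finpartition of Fin 2q, namely the pair partition ρ whose blocks are the pairs {j, 2q−1−j} for 0 ≤ j ≤ q−1; moreover ρ satisfies ρ ⊔ γ_{(q,q)} = ⊤ in the lattice of finpartitions of Fin 2q. -/
/-- A finpartition `π` of `Fin p` is adapted to a labelling `ε : Fin p → Fin 2` if every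
block has even cardinality and any two consecutive elements of a block (in increasing
order) carry distinct labels. -/
def IsAdapted {p : ℕ} (ε : Fin p → Fin 2)
    (π : Finpartition (Finset.univ : Finset (Fin p))) : Prop :=
  ∀ B ∈ π.parts, Even B.card ∧
    ∀ x ∈ B, ∀ y ∈ B, (x < y ∧ ∀ z ∈ B, x < z → y ≤ z) → ε x ≠ ε y

/-- The "rainbow" pair partition of `Fin (2q)`, whose blocks are the pairs
`{j, 2q - 1 - j}` for `0 ≤ j ≤ q - 1`. -/
def rainbowPart (q : ℕ) : Finpartition (Finset.univ : Finset (Fin (2 * q))) :=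
  letI f : Fin (2 * q) → ℕ := fun k => min (k : ℕ) (2 * q - 1 - (k : ℕ))
  letI : DecidableRel ⇑(Setoid.ker f) := fun x y =>
    inferInstanceAs (Decidable (f x = f y))
  Finpartition.ofSetoid (Setoid.ker f)

theorem fp_le_iff_s8 {n : ℕ} (π ρ : Finpartition (Finset.univ : Finset (Fin n))) :
    π ≤ ρ ↔ ∀ x y, π.part x = π.part y → ρ.part x = ρ.part y := by
  constructor
  · intro h x y hxy
    obtain ⟨C, hC, hsub⟩ := h (π.part_mem.2 (Finset.mem_univ x))
    have hx : x ∈ C := hsub (π.mem_part (Finset.mem_univ x))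
    have hy : y ∈ C := hsub (by rw [hxy]; exact π.mem_part (Finset.mem_univ y))
    rw [ρ.part_eq_of_mem hC hx, ρ.part_eq_of_mem hC hy]
  · intro h B hB
    obtain ⟨x, hx⟩ := π.nonempty_of_mem_parts hB
    refine ⟨ρ.part x, ρ.part_mem.2 (Finset.mem_univ x), fun y hy => ?_⟩
    rw [h x y (by rw [π.part_eq_of_mem hB hx, π.part_eq_of_mem hB hy])]
    exact ρ.mem_part (Finset.mem_univ y)

theorem fp_part_eq {n : ℕ} (π : Finpartition (Finset.univ : Finset (Fin n))) (x y : Fin n) :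
    π.part x = π.part y ↔ x ∈ π.part y := by
  rw [π.mem_part_iff_part_eq_part (Finset.mem_univ _) (Finset.mem_univ _)]

theorem rainbow_rel (q : ℕ) (x y : Fin (2 * q)) :
    (rainbowPart q).part x = (rainbowPart q).part y ↔
      ((x : ℕ) = y ∨ (x : ℕ) + y = 2 * q - 1) := by
  rw [fp_part_eq]
  refine Iff.trans (@Finpartition.mem_part_ofSetoid_iff_rel (_) (_) (_) (_) (_) (_) (_)) ?_
  rw [Setoid.ker_def]
  omega

theorem interval_rel (q : ℕ) (x y : Fin (2 * q)) (hx : (x : ℕ) < q) (hy : (y : ℕ) < q) :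
    (intervalPart (2 * q) (fun _ : Fin 2 => q)).part x =
      (intervalPart (2 * q) (fun _ : Fin 2 => q)).part y := by
  rw [fp_part_eq]
  refine (@Finpartition.mem_part_ofSetoid_iff_rel (_) (_) (_) (_) (_) (_) (_)).2 ?_
  rw [Setoid.ker_def]
  have h : ∀ z : Fin (2 * q), (z : ℕ) < q → intervalIdx (fun _ : Fin 2 => q) z = 0 := by
    intro z hz
    rw [intervalIdx, Finset.card_eq_zero, Finset.filter_eq_empty_iff]
    intro i _
    have := Finset.single_le_sum (f := fun _ : Fin 2 => q)
      (s := Finset.univ.filter fun j : Fin 2 => j ≤ i) (fun _ _ => Nat.zero_le _)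
      (a := i) (by simp)
    omega
  rw [h x hx, h y hy]

theorem rainbow_mem (q : ℕ) {B : Finset (Fin (2 * q))} (hB : B ∈ (rainbowPart q).parts)
    {x : Fin (2 * q)} (hx : x ∈ B) (y : Fin (2 * q)) :
    y ∈ B ↔ ((y : ℕ) = x ∨ (y : ℕ) + x = 2 * q - 1) := by
  rw [← rainbow_rel, fp_part_eq, (rainbowPart q).part_eq_of_mem hB hx]

/-- A block contains at most one element of each half. -/
theorem same_half {q : ℕ} {ε : Fin (2 * q) → Fin 2}
    (hε : ∀ k : Fin (2 * q), ε k = if (k : ℕ) < q then 0 else 1)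
    {π : Finpartition (Finset.univ : Finset (Fin (2 * q)))} (ha : IsAdapted ε π)
    {B : Finset (Fin (2 * q))} (hB : B ∈ π.parts) {x y : Fin (2 * q)}
    (hx : x ∈ B) (hy : y ∈ B) (h : (x : ℕ) < q ↔ (y : ℕ) < q) : x = y := by
  have key : ∀ x y : Fin (2 * q), x ∈ B → y ∈ B → ((x : ℕ) < q ↔ (y : ℕ) < q) → ¬ x < y := by
    intro x y hx hy h hlt
    have hne : (B.filter fun z => x < z).Nonempty := ⟨y, by simp [hy, hlt]⟩
    have hm := Finset.min'_mem _ hne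
    set m := (B.filter fun z => x < z).min' hne with hmd
    rw [Finset.mem_filter] at hm
    have hmy : m ≤ y := Finset.min'_le _ _ (by simp [hy, hlt])
    refine (ha B hB).2 x hx m hm.1 ⟨hm.2, fun z hz hxz => Finset.min'_le _ _ (by simp [hz, hxz])⟩ ?_
    have h1 := hm.2
    rw [Fin.lt_def] at h1
    rw [Fin.le_def] at hmy
    rw [hε, hε]
    have : ((x : ℕ) < q ↔ (m : ℕ) < q) := by omega
    simp only [this]
  exact le_antisymm (not_lt.1 (key y x hy hx h.symm)) (not_lt.1 (key x y hx hy h))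

theorem exists_partner {q : ℕ} {ε : Fin (2 * q) → Fin 2}
    (hε : ∀ k : Fin (2 * q), ε k = if (k : ℕ) < q then 0 else 1)
    {π : Finpartition (Finset.univ : Finset (Fin (2 * q)))} (ha : IsAdapted ε π)
    (x : Fin (2 * q)) : ∃ y, π.part x = π.part y ∧ ¬ ((x : ℕ) < q ↔ (y : ℕ) < q) := by
  by_contra! hcon
  have hB := π.part_mem.2 (Finset.mem_univ x)
  have hx := π.mem_part (Finset.mem_univ x)
  have : π.part x = {x} := by
    ext y
    rw [Finset.mem_singleton]
    constructor
    · intro hy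
      exact (same_half hε ha hB hx hy (hcon y ((fp_part_eq π y x).2 hy).symm)).symm
    · rintro rfl; exact hx
  have h2 := (ha _ hB).1
  rw [this] at h2
  simp at h2

theorem mono_id (q : ℕ) (g : ℕ → ℕ) (hg : ∀ i j, i < j → j < q → g i < g j)
    (hb : ∀ i, i < q → g i < q) (i : ℕ) (hi : i < q) : g i = i := by
  have h1 : ∀ i, i < q → i ≤ g i := by
    intro i
    induction i with
    | zero => intro _; omega
    | succ k ih =>
      intro hk
      have := ih (by omega)
      have := hg k (k + 1) (by omega) hk
      omega
  have h2 : ∀ d i, i + d + 1 = q → g i + d < q := by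
    intro d
    induction d with
    | zero => intro i hi; exact hb i (by omega)
    | succ k ih =>
      intro i hi
      have := ih (i + 1) (by omega)
      have := hg i (i + 1) (by omega) (by omega)
      omega
  have := h1 i hi
  have := h2 (q - 1 - i) i (by omega)
  omega

theorem partner_eq {q : ℕ} {ε : Fin (2 * q) → Fin 2}
    (hε : ∀ k : Fin (2 * q), ε k = if (k : ℕ) < q then 0 else 1)
    {π : Finpartition (Finset.univ : Finset (Fin (2 * q)))} (hn : IsNoncrossing π)
    (ha : IsAdapted ε π) (x y : Fin (2 * q)) (hx : (x : ℕ) < q) (hy : ¬ (y : ℕ) < q) :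
    π.part x = π.part y ↔ (x : ℕ) + y = 2 * q - 1 := by
  have same : ∀ u v : Fin (2 * q), π.part u = π.part v → ((u : ℕ) < q ↔ (v : ℕ) < q) → u = v :=
    fun u v huv h => same_half hε ha (π.part_mem.2 (Finset.mem_univ v))
      ((fp_part_eq π u v).1 huv) (π.mem_part (Finset.mem_univ v)) h
  choose s hs hs' using fun x => exists_partner hε ha x
  let g : ℕ → ℕ := fun i => if h : i < 2 * q then 2 * q - 1 - (s ⟨i, h⟩ : ℕ) else 0
  have hgv : ∀ i (h : i < 2 * q), g i = 2 * q - 1 - (s ⟨i, h⟩ : ℕ) := fun i h => dif_pos h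
  have hgid := mono_id q g (by
    intro i j hij hj
    have hi2 : i < 2 * q := by omega
    have hj2 : j < 2 * q := by omega
    rw [hgv i hi2, hgv j hj2]
    have a1 := hs' ⟨i, hi2⟩
    have a2 := hs' ⟨j, hj2⟩
    have b1 := hs ⟨i, hi2⟩
    have b2 := hs ⟨j, hj2⟩
    simp only at a1 a2
    have hne : π.part ⟨i, hi2⟩ ≠ π.part ⟨j, hj2⟩ := by
      intro h
      have := same _ _ h (by simp only; omega)
      simp at this
      omega
    have hlt : ¬ (s ⟨i, hi2⟩ : ℕ) ≤ s ⟨j, hj2⟩ := by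
      intro hle
      rcases Nat.lt_or_eq_of_le hle with h | h
      · exact hne (hn ⟨i, hi2⟩ ⟨j, hj2⟩ (s ⟨i, hi2⟩) (s ⟨j, hj2⟩)
          (by rw [Fin.lt_def]; exact hij) (by rw [Fin.lt_def]; simp only; omega)
          (by rw [Fin.lt_def]; exact h) _ (π.part_mem.2 (Finset.mem_univ _)) _
          (π.part_mem.2 (Finset.mem_univ _))
          (π.mem_part (Finset.mem_univ _)) ((fp_part_eq _ _ _).1 b1.symm)
          (π.mem_part (Finset.mem_univ _)) ((fp_part_eq _ _ _).1 b2.symm))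
      · exact hne (by rw [b1, b2, Fin.ext h])
    have := (s ⟨i, hi2⟩).isLt
    omega) (by
    intro i hi
    have hi2 : i < 2 * q := by omega
    rw [hgv i hi2]
    have a1 := hs' ⟨i, hi2⟩
    simp only at a1
    omega) x hx
  rw [hgv x x.isLt] at hgid
  have hlt := (s x).isLt
  have a1 := hs' x
  have b1 := hs x
  simp only [Fin.eta] at hgid
  constructor
  · intro h
    have := same (s x) y (by rw [← b1, h]) (by omega)
    rw [← this]
    omega
  · intro h
    have : s x = y := Fin.ext (by omega)
    rw [b1, this]

theorem rainbow_unique_adapted_noncrossing (q : ℕ) (hq : 1 ≤ q)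
    (ε : Fin (2 * q) → Fin 2)
    (hε : ∀ k : Fin (2 * q), ε k = if (k : ℕ) < q then 0 else 1) :
    (∀ π : Finpartition (Finset.univ : Finset (Fin (2 * q))),
      (IsNoncrossing π ∧ IsAdapted ε π) ↔ π = rainbowPart q) ∧
    IsLUB ({rainbowPart q, intervalPart (2 * q) (fun _ : Fin 2 => q)} :
      Set (Finpartition (Finset.univ : Finset (Fin (2 * q))))) ⊤ := by
  refine ⟨fun π => ⟨?_, ?_⟩, ?_, ?_⟩
  · rintro ⟨hn, ha⟩
    have key : ∀ x y, π.part x = π.part y ↔ (rainbowPart q).part x = (rainbowPart q).part y := by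
      intro x y
      rw [rainbow_rel]
      by_cases hxy : (x : ℕ) < q ↔ (y : ℕ) < q
      · constructor
        · intro h
          left
          rw [same_half hε ha (π.part_mem.2 (Finset.mem_univ y)) ((fp_part_eq π x y).1 h)
            (π.mem_part (Finset.mem_univ y)) hxy]
        · intro h
          have : x = y := Fin.ext (by omega)
          rw [this]
      · by_cases hx : (x : ℕ) < q
        · rw [partner_eq hε hn ha x y hx (by omega)]
          omega
        · rw [eq_comm, partner_eq hε hn ha y x (by omega) hx]
          omega
    exact le_antisymm ((fp_le_iff_s8 _ _).2 fun x y => (key x y).1)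
      ((fp_le_iff_s8 _ _).2 fun x y => (key x y).2)
  · rintro rfl
    constructor
    · intro a b c d hab hbc hcd B hB B' hB' haB hcB hbB hdB
      rw [rainbow_mem q hB haB] at hcB
      rw [rainbow_mem q hB' hbB] at hdB
      rw [Fin.lt_def] at hab hbc hcd
      omega
    · intro B hB
      constructor
      · obtain ⟨x, hx⟩ := (rainbowPart q).nonempty_of_mem_parts hB
        have hxl := x.isLt
        have : B = {x, ⟨2 * q - 1 - x, by omega⟩} := by
          ext y
          rw [rainbow_mem q hB hx, Finset.mem_insert, Finset.mem_singleton, Fin.ext_iff,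
            Fin.ext_iff]
          simp only
          omega
        rw [this, Finset.card_pair]
        · exact even_two
        · rw [Ne, Fin.ext_iff]
          simp only
          omega
      · rintro x hx y hy ⟨hxy, -⟩
        rw [rainbow_mem q hB hx] at hy
        rw [Fin.lt_def] at hxy
        rw [hε, hε, if_pos (by omega), if_neg (by omega)]
        decide
  · intro _ _
    exact le_top
  · intro P hP
    have h1 := (fp_le_iff_s8 _ _).1 (hP (Set.mem_insert _ _))
    have h2 := (fp_le_iff_s8 _ _).1 (hP (Set.mem_insert_of_mem _ (Set.mem_singleton _)))
    rw [fp_le_iff_s8]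
    have h0 : ∀ x, P.part x = P.part ⟨0, by omega⟩ := by
      intro x
      by_cases hx : (x : ℕ) < q
      · exact h2 _ _ (interval_rel q _ _ hx (by simp only; omega))
      · have hl := x.isLt
        rw [h1 x ⟨2 * q - 1 - x, by omega⟩ ((rainbow_rel q _ _).2 (by simp only; omega))]
        exact h2 _ _ (interval_rel q _ _ (by simp only; omega) (by simp only; omega))
    intro x y _
    rw [h0 x, h0 y]
end

section
/- Let p_1, p_2 ≥ 1 be integers, p = p_1 + p_2, and let ε : Fin p → Fin 2 be the function taking the value 0 on {0,…,p_1−1} and the value 1 on {p_1,…,p−1}. Then the sum, over all ε-adapted noncrossing finpartitions π of Fin p satisfying π ⊔ γ_{(p_1,p_2)} = ⊤, of (−1)^{|π|} · ∏_{V block of π} C_{(#V)/2 − 1}, equals (−1)^{p_1} if p_1 = p_2 and equals 0 if p_1 ≠ p_2. Here |π| is the number of blocks of π, #V the cardinality of the block V, and C_i the i-th Catalan number. -/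
lemma nat_rev {p₁ p₂ : ℕ} (h₁ : 1 ≤ p₁) (P : ℕ → ℕ → Prop)
    (hP : ∀ x y, P x y → x < p₁ ∧ p₁ ≤ y ∧ y < p₁ + p₂)
    (ex₁ : ∀ x, x < p₁ → ∃ y, P x y)
    (ex₂ : ∀ y, p₁ ≤ y → y < p₁ + p₂ → ∃ x, P x y)
    (anti₁ : ∀ x y x' y', P x y → P x' y' → x < x' → y' < y)
    (anti₂ : ∀ x y x' y', P x y → P x' y' → y < y' → x' < x) :
    p₁ = p₂ ∧ ∀ x y, P x y → x + y + 1 = p₁ + p₂ := by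
  have a : ∀ x y, P x y → x + y + 1 ≤ p₁ + p₂ := by
    intro x
    induction x with
    | zero => intro y h; have := hP _ _ h; omega
    | succ n ih =>
      intro y h
      have h0 := hP _ _ h
      obtain ⟨y', h'⟩ := ex₁ n (by omega)
      have := ih _ h'
      have := anti₁ _ _ _ _ h' h (by omega)
      omega
  have b : ∀ k x y, k + x + 1 = p₁ → P x y → 2 * p₁ ≤ x + y + 1 := by
    intro k
    induction k with
    | zero => intro x y hk h; have := hP _ _ h; omega
    | succ n ih =>
      intro x y hk h
      have h0 := hP _ _ h
      obtain ⟨y', h'⟩ := ex₁ (x + 1) (by omega)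
      have := ih _ _ (by omega) h'
      have := anti₁ _ _ _ _ h h' (by omega)
      omega
  have c : ∀ k x y, y = p₁ + k → P x y → x + y + 1 ≤ 2 * p₁ := by
    intro k
    induction k with
    | zero => intro x y hk h; have := hP _ _ h; omega
    | succ n ih =>
      intro x y hk h
      have h0 := hP _ _ h
      obtain ⟨x', h'⟩ := ex₂ (p₁ + n) (by omega) (by omega)
      have := ih _ _ rfl h'
      have := anti₂ _ _ _ _ h' h (by omega)
      omega
  have d : ∀ k x y, k + y + 1 = p₁ + p₂ → P x y → p₁ + p₂ ≤ x + y + 1 := by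
    intro k
    induction k with
    | zero => intro x y hk h; have := hP _ _ h; omega
    | succ n ih =>
      intro x y hk h
      have h0 := hP _ _ h
      obtain ⟨x', h'⟩ := ex₂ (y + 1) (by omega) (by omega)
      have := ih _ _ (by omega) h'
      have := anti₂ _ _ _ _ h h' (by omega)
      omega
  have key : ∀ x y, P x y → p₁ = p₂ ∧ x + y + 1 = p₁ + p₂ := by
    intro x y h
    have h0 := hP _ _ h
    have := a _ _ h
    have := b (p₁ - 1 - x) _ _ (by omega) h
    have := c (y - p₁) _ _ (by omega) h
    have := d (p₁ + p₂ - 1 - y) _ _ (by omega) h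
    omega
  obtain ⟨y, hy⟩ := ex₁ 0 (by omega)
  exact ⟨(key _ _ hy).1, fun x y h => (key x y h).2⟩

lemma succ_in {p : ℕ} (B : Finset (Fin p)) (x x' : Fin p) (hx' : x' ∈ B) (h : x < x') :
    ∃ y ∈ B, x < y ∧ y ≤ x' ∧ ∀ z ∈ B, x < z → y ≤ z := by
  have hne : (B.filter (fun z => x < z)).Nonempty := ⟨x', by simp [hx', h]⟩
  have hm := Finset.min'_mem _ hne
  simp only [Finset.mem_filter] at hm
  refine ⟨_, hm.1, hm.2, Finset.min'_le _ _ (by simp [hx', h]), fun z hz hxz => ?_⟩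
  exact Finset.min'_le _ _ (by simp [hz, hxz])

lemma block_two {p₁ p₂ : ℕ} (ε : Fin (p₁ + p₂) → Fin 2)
    (hε : ∀ k : Fin (p₁ + p₂), ε k = if (k : ℕ) < p₁ then 0 else 1)
    (π : Finpartition (Finset.univ : Finset (Fin (p₁ + p₂)))) (h : IsAdapted ε π)
    (B : Finset (Fin (p₁ + p₂))) (hB : B ∈ π.parts) :
    ∃ x y : Fin (p₁ + p₂), (x : ℕ) < p₁ ∧ p₁ ≤ (y : ℕ) ∧ B = {x, y} := by
  obtain ⟨hev, hc⟩ := h B hB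
  have key : ∀ x ∈ B, ∀ x' ∈ B, x < x' → (x : ℕ) < p₁ ∧ p₁ ≤ (x' : ℕ) := by
    intro x hx x' hx' hlt
    obtain ⟨y, hy, hxy, hyx, hmin⟩ := succ_in B x x' hx' hlt
    have := hc x hx y hy ⟨hxy, hmin⟩
    rw [hε, hε] at this
    have h1 : (x : ℕ) < y := hxy
    have h2 : (y : ℕ) ≤ x' := hyx
    split_ifs at this <;> omega
  have hne : B.Nonempty := π.nonempty_of_mem_parts hB
  have hcard : 1 < B.card := by
    have := hne.card_pos
    obtain ⟨k, hk⟩ := hev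
    omega
  obtain ⟨a, ha, b, hb, hab⟩ := Finset.one_lt_card.1 hcard
  wlog hlt : a < b generalizing a b
  · exact this b hb a ha hab.symm (lt_of_le_of_ne (not_lt.1 hlt) hab.symm)
  have hk := key a ha b hb hlt
  refine ⟨a, b, hk.1, hk.2, ?_⟩
  ext z
  simp only [Finset.mem_insert, Finset.mem_singleton]
  constructor
  · intro hz
    rcases lt_trichotomy z a with h | h | h
    · have := key z hz a ha h; omega
    · exact Or.inl h
    · rcases lt_trichotomy z b with h' | h' | h'
      · have := key z hz b hb h'
        have := key a ha z hz h
        omega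
      · exact Or.inr h'
      · have := key b hb z hz h'; omega
  · rintro (rfl | rfl) <;> assumption

lemma struct {p₁ p₂ : ℕ} (h₁ : 1 ≤ p₁) (ε : Fin (p₁ + p₂) → Fin 2)
    (hε : ∀ k : Fin (p₁ + p₂), ε k = if (k : ℕ) < p₁ then 0 else 1)
    (π : Finpartition (Finset.univ : Finset (Fin (p₁ + p₂)))) (hn : IsNoncrossing π)
    (h : IsAdapted ε π) :
    p₁ = p₂ ∧ ∀ B ∈ π.parts, ∃ x : Fin (p₁ + p₂), B = {x, Fin.rev x} := by
  have hex : ∀ x, ∃ B ∈ π.parts, x ∈ B := fun x =>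
    π.exists_mem (Finset.mem_univ x)
  have hu : ∀ B ∈ π.parts, ∀ B' ∈ π.parts, ∀ x, x ∈ B → x ∈ B' → B = B' :=
    fun B hB B' hB' x hx hx' => π.eq_of_mem_parts hB hB' hx hx'
  have main := nat_rev (p₂ := p₂) h₁
    (fun a b => ∃ x y : Fin (p₁ + p₂), (x : ℕ) = a ∧ (y : ℕ) = b ∧ (x : ℕ) < p₁ ∧
      p₁ ≤ (y : ℕ) ∧ ({x, y} : Finset _) ∈ π.parts)
    (by rintro _ _ ⟨x, y, rfl, rfl, hx, hy, -⟩; exact ⟨hx, hy, y.2⟩)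
    (by
      intro a ha
      obtain ⟨B, hB, haB⟩ := hex ⟨a, by omega⟩
      obtain ⟨x, y, hx, hy, rfl⟩ := block_two ε hε π h B hB
      simp only [Finset.mem_insert, Finset.mem_singleton, Fin.ext_iff] at haB
      exact ⟨y, x, y, by omega, rfl, hx, hy, hB⟩)
    (by
      intro b hb hb'
      obtain ⟨B, hB, haB⟩ := hex ⟨b, by omega⟩
      obtain ⟨x, y, hx, hy, rfl⟩ := block_two ε hε π h B hB
      simp only [Finset.mem_insert, Finset.mem_singleton, Fin.ext_iff] at haB
      exact ⟨x, x, y, rfl, by omega, hx, hy, hB⟩)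
    (by
      rintro _ _ _ _ ⟨x, y, rfl, rfl, hx, hy, hB⟩ ⟨x', y', rfl, rfl, hx', hy', hB'⟩ hlt
      by_contra hcon
      have hne : ({x, y} : Finset _) ≠ {x', y'} := by
        intro he
        have : x ∈ ({x', y'} : Finset _) := by rw [← he]; simp
        simp only [Finset.mem_insert, Finset.mem_singleton, Fin.ext_iff] at this
        omega
      rcases Nat.lt_or_ge y y' with hyy | hyy
      · exact hne (hn x x' y y' hlt (Fin.lt_def.2 (by omega)) hyy _ hB _ hB'
          (by simp) (by simp) (by simp) (by simp))
      · have : y = y' := Fin.ext (by omega)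
        exact hne (hu _ hB _ hB' y (by simp) (by simp [this])))
    (by
      rintro _ _ _ _ ⟨x, y, rfl, rfl, hx, hy, hB⟩ ⟨x', y', rfl, rfl, hx', hy', hB'⟩ hlt
      by_contra hcon
      have hne : ({x, y} : Finset _) ≠ {x', y'} := by
        intro he
        have : y ∈ ({x', y'} : Finset _) := by rw [← he]; simp
        simp only [Finset.mem_insert, Finset.mem_singleton, Fin.ext_iff] at this
        omega
      rcases Nat.lt_or_ge x x' with hyy | hyy
      · exact hne (hn x x' y y' hyy (Fin.lt_def.2 (by omega)) hlt _ hB _ hB'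
          (by simp) (by simp) (by simp) (by simp))
      · have : x = x' := Fin.ext (by omega)
        exact hne (hu _ hB _ hB' x (by simp) (by simp [this])))
  refine ⟨main.1, fun B hB => ?_⟩
  obtain ⟨x, y, hx, hy, rfl⟩ := block_two ε hε π h B hB
  have := main.2 x y ⟨x, y, rfl, rfl, hx, hy, hB⟩
  have hy : y = Fin.rev x := by ext; rw [Fin.val_rev]; omega
  exact ⟨x, by rw [hy]⟩

lemma pair_eq {n : ℕ} {a x : Fin n} (h : a ∈ ({x, Fin.rev x} : Finset (Fin n))) :
    ({x, Fin.rev x} : Finset (Fin n)) = {a, Fin.rev a} := by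
  simp only [Finset.mem_insert, Finset.mem_singleton] at h
  rcases h with rfl | rfl
  · rfl
  · rw [Fin.rev_rev, Finset.pair_comm]

/-- The rainbow pairing. -/
def rainbow (n : ℕ) : Finpartition (Finset.univ : Finset (Fin n)) :=
  Finpartition.ofExistsUnique (Finset.univ.image fun x : Fin n => ({x, Fin.rev x} : Finset (Fin n)))
    (fun _ _ => Finset.subset_univ _)
    (fun a _ => ⟨{a, Fin.rev a}, by simp, by
      rintro t ⟨ht, hat⟩
      obtain ⟨x, -, rfl⟩ := Finset.mem_image.1 ht
      exact pair_eq hat⟩)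
    (by
      intro h
      obtain ⟨x, -, hx⟩ := Finset.mem_image.1 h
      simp at hx)

lemma mem_rainbow {n : ℕ} (B : Finset (Fin n)) :
    B ∈ (rainbow n).parts ↔ ∃ x, B = {x, Fin.rev x} := by
  simp [rainbow, Finpartition.ofExistsUnique, eq_comm]

lemma eq_rainbow {n : ℕ} (π : Finpartition (Finset.univ : Finset (Fin n)))
    (h : ∀ B ∈ π.parts, ∃ x : Fin n, B = {x, Fin.rev x}) : π = rainbow n := by
  ext B
  rw [mem_rainbow]
  refine ⟨h B, ?_⟩
  rintro ⟨x, rfl⟩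
  obtain ⟨B, hB, hx⟩ := π.exists_mem (Finset.mem_univ x)
  obtain ⟨y, rfl⟩ := h B hB
  rwa [← pair_eq hx]

lemma rainbow_noncrossing (n : ℕ) : IsNoncrossing (rainbow n) := by
  intro a b c d hab hbc hcd B hB B' hB' ha hc hb hd
  obtain ⟨x, rfl⟩ := (mem_rainbow _).1 hB
  obtain ⟨y, rfl⟩ := (mem_rainbow _).1 hB'
  simp only [Finset.mem_insert, Finset.mem_singleton, Fin.ext_iff, Fin.val_rev] at ha hb hc hd
  rw [Fin.lt_def] at hab hbc hcd
  omega

lemma rainbow_adapted (p : ℕ) (ε : Fin (p + p) → Fin 2)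
    (hε : ∀ k : Fin (p + p), ε k = if (k : ℕ) < p then 0 else 1) :
    IsAdapted ε (rainbow (p + p)) := by
  intro B hB
  obtain ⟨x, rfl⟩ := (mem_rainbow _).1 hB
  constructor
  · rw [Finset.card_pair]
    · decide
    · intro h
      have := congrArg Fin.val h
      rw [Fin.val_rev] at this
      omega
  · rintro a ha b hb ⟨hab, -⟩
    simp only [Finset.mem_insert, Finset.mem_singleton, Fin.ext_iff, Fin.val_rev] at ha hb
    rw [Fin.lt_def] at hab
    rw [hε, hε, if_pos (by omega), if_neg (by omega)]
    simp

lemma rainbow_pair_card (p : ℕ) (B : Finset (Fin (p + p)))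
    (hB : B ∈ (rainbow (p + p)).parts) : B.card = 2 := by
  obtain ⟨x, rfl⟩ := (mem_rainbow _).1 hB
  rw [Finset.card_pair]
  intro h
  have := congrArg Fin.val h
  rw [Fin.val_rev] at this
  omega

lemma rainbow_card (p : ℕ) : (rainbow (p + p)).parts.card = p := by
  have := (rainbow (p + p)).sum_card_parts
  rw [Finset.sum_congr rfl (rainbow_pair_card p)] at this
  simp at this
  omega

lemma intervalIdx_eq (p₁ p₂ : ℕ) (k : Fin (p₁ + p₂)) :
    intervalIdx ![p₁, p₂] k = if (k : ℕ) < p₁ then 0 else 1 := by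
  have h2 := k.2
  have e0 : ∑ j ∈ Finset.univ.filter (fun j : Fin 2 => j ≤ 0), ![p₁, p₂] j = p₁ := by
    simp [Finset.sum_filter]
  have e1 : ∑ j ∈ Finset.univ.filter (fun j : Fin 2 => j ≤ 1), ![p₁, p₂] j = p₁ + p₂ := by
    simp [Finset.sum_filter, Fin.le_def]
  unfold intervalIdx
  rw [Finset.card_filter, Fin.sum_univ_two, e0, e1]
  split_ifs <;> omega

lemma rainbow_lub (p : ℕ) (hp : 1 ≤ p) :
    IsLUB ({rainbow (p + p), intervalPart (p + p) ![p, p]} :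
            Set (Finpartition (Finset.univ : Finset (Fin (p + p))))) ⊤ := by
  refine ⟨fun _ _ => le_top, fun τ hτ => ?_⟩
  have hr : rainbow (p + p) ≤ τ := hτ (by simp)
  have hi : intervalPart (p + p) ![p, p] ≤ τ := hτ (by simp)
  have h1 : ∀ x : Fin (p + p), τ.part x = τ.part (Fin.rev x) := by
    intro x
    obtain ⟨C, hC, hs⟩ := hr ((mem_rainbow _).2 ⟨x, rfl⟩)
    rw [τ.part_eq_of_mem hC (hs (by simp)), τ.part_eq_of_mem hC (hs (by simp))]
  have h2 : ∀ x y : Fin (p + p), intervalIdx ![p, p] x = intervalIdx ![p, p] y →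
      τ.part x = τ.part y := by
    intro x y hxy
    obtain ⟨C, hC, hs⟩ := hi ((intervalPart (p + p) ![p, p]).part_mem.2 (Finset.mem_univ x))
    have hx : x ∈ (intervalPart (p + p) ![p, p]).part x :=
      Finpartition.mem_part _ (Finset.mem_univ x)
    have hy : y ∈ (intervalPart (p + p) ![p, p]).part x := by
      unfold intervalPart
      exact (@Finpartition.mem_part_ofSetoid_iff_rel _ _ _ _ _ (_) _).2 hxy
    rw [τ.part_eq_of_mem hC (hs hx), τ.part_eq_of_mem hC (hs hy)]
  let z : Fin (p + p) := ⟨0, by omega⟩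
  have hz : (z : ℕ) < p := hp
  have h3 : ∀ x, τ.part x = τ.part z := by
    intro x
    by_cases hx : (x : ℕ) < p
    · exact h2 _ _ (by rw [intervalIdx_eq, intervalIdx_eq, if_pos hx, if_pos hz])
    · rw [h1 x]
      refine h2 _ _ ?_
      rw [intervalIdx_eq, intervalIdx_eq, if_pos, if_pos hz]
      rw [Fin.val_rev]
      omega
  intro B hB
  refine ⟨τ.part z, τ.part_mem.2 (Finset.mem_univ _), fun x _ => ?_⟩
  rw [← h3 x]
  exact Finpartition.mem_part _ (Finset.mem_univ x)

open Classical in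
theorem signed_catalan_sum_over_adapted_noncrossing (p₁ p₂ : ℕ) (h₁ : 1 ≤ p₁)
    (h₂ : 1 ≤ p₂) (ε : Fin (p₁ + p₂) → Fin 2)
    (hε : ∀ k : Fin (p₁ + p₂), ε k = if (k : ℕ) < p₁ then 0 else 1) :
    ∑ π ∈ Finset.univ.filter
        (fun π : Finpartition (Finset.univ : Finset (Fin (p₁ + p₂))) =>
          IsNoncrossing π ∧ IsAdapted ε π ∧
          IsLUB ({π, intervalPart (p₁ + p₂) ![p₁, p₂]} :
            Set (Finpartition (Finset.univ : Finset (Fin (p₁ + p₂))))) ⊤),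
      (-1 : ℤ) ^ π.parts.card * ∏ V ∈ π.parts, (catalan (V.card / 2 - 1) : ℤ) =
    if p₁ = p₂ then (-1 : ℤ) ^ p₁ else 0 := by
  by_cases hp : p₁ = p₂
  · subst hp
    rw [if_pos rfl, Finset.sum_eq_single (rainbow (p₁ + p₁))]
    · rw [rainbow_card, Finset.prod_eq_one, mul_one]
      intro V hV
      rw [rainbow_pair_card _ _ hV]
      simp
    · intro π hπ hne
      obtain ⟨-, hn, ha, -⟩ := Finset.mem_filter.1 hπ
      exact absurd (eq_rainbow π (struct h₁ ε hε π hn ha).2) hne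
    · intro h
      exact absurd (Finset.mem_filter.2 ⟨Finset.mem_univ _, rainbow_noncrossing _,
        rainbow_adapted _ ε hε, rainbow_lub _ h₁⟩) h
  · rw [if_neg hp]
    refine Finset.sum_eq_zero fun π hπ => ?_
    obtain ⟨-, hn, ha, -⟩ := Finset.mem_filter.1 hπ
    exact absurd (struct h₁ ε hε π hn ha).1 hp
end
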